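/- arXiv:1503.02862 — 4 statements merged into one kernel-verified Lean document; each statement's English description precedes it below -/
import Mathlib

section
/- Under the stated hypotheses on φ, the identity ∫₀^∞ s^{a+3}·(φ(s)² + φ'(s)²) ds = (3(a+2)/2)·∫₀^∞ s^{a+1}·φ(s)² ds holds. -/
/-!
Multiplying `φ'' + (a / s) φ' = φ` by `s ^ p φ` and collecting derivatives gives, for every
exponent `p`,
`d/ds [s ^ p φ φ' - (p - a) / 2 s ^ (p - 1) φ²] =
  s ^ p (φ² + φ'²) - (p - a) (p - 1) / 2 s ^ (p - 2) φ²`.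
If `φ = O(s ^ (-b))` and `φ' = O(s ^ (-b'))` at `0` with `2 b < p - 1` and `2 b' < p + 1`, and `φ`
and `φ'` decay fast enough at infinity, then the bracket vanishes at both ends and all integrals
converge. The theorem is the case `p = a + 3`, `b = 0`, `b' = a`.
-/

section

open Filter Set Topology Asymptotics MeasureTheory

theorem integral_Ioi_of_hasDerivAt_of_tendsto_nhdsGT {E : Type*} [NormedAddCommGroup E]
    [NormedSpace ℝ E] [CompleteSpace E] {f f' : ℝ → E} {x : ℝ} {l m : E}
    (hderiv : ∀ y ∈ Ioi x, HasDerivAt f (f' y) y) (hint : IntegrableOn f' (Ioi x))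
    (hl : Tendsto f (𝓝[>] x) (𝓝 l)) (hm : Tendsto f atTop (𝓝 m)) :
    ∫ y in Ioi x, f' y = m - l := by
  have heq : ∀ y ∈ Ioi x, Function.update f x l y = f y := fun y hy ↦
    Function.update_of_ne (ne_of_gt hy) l f
  have hcont : ContinuousWithinAt (Function.update f x l) (Ici x) x := by
    rwa [continuousWithinAt_update_same, Ici_sdiff_left]
  have hderiv' : ∀ y ∈ Ioi x, HasDerivAt (Function.update f x l) (f' y) y := fun y hy ↦
    (hderiv y hy).congr_of_eventuallyEq (eventually_of_mem (Ioi_mem_nhds hy) heq)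
  have hm' : Tendsto (Function.update f x l) atTop (𝓝 m) :=
    hm.congr' (eventually_of_mem (Ioi_mem_atTop x) fun y hy ↦ (heq y hy).symm)
  simpa using integral_Ioi_of_hasDerivAt_of_tendsto hcont hderiv' hint hm'

theorem tendsto_rpow_nhdsGT_zero {x : ℝ} (hx : 0 < x) :
    Tendsto (fun s : ℝ ↦ s ^ x) (𝓝[>] 0) (𝓝 0) := by
  simpa [Real.zero_rpow hx.ne'] using
    (Real.continuousAt_rpow_const 0 x (Or.inr hx.le)).tendsto.mono_left nhdsWithin_le_nhds

theorem tendsto_rpow_atTop_of_neg {x : ℝ} (hx : x < 0) :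
    Tendsto (fun s : ℝ ↦ s ^ x) atTop (𝓝 0) := by
  simpa only [neg_neg] using tendsto_rpow_neg_atTop (neg_pos.mpr hx)

theorem isBigO_mul_rpow_add {l : Filter ℝ} (hl : ∀ᶠ s in l, 0 < s) {f g : ℝ → ℝ} {x y : ℝ}
    (hf : f =O[l] (· ^ x)) (hg : g =O[l] (· ^ y)) :
    (fun s ↦ f s * g s) =O[l] (· ^ (x + y)) :=
  (hf.mul hg).congr' .rfl (hl.mono fun _ hs ↦ (Real.rpow_add hs x y).symm)

theorem isBigO_rpow_neg_of_bounded_rpow_mul {f : ℝ → ℝ} {x : ℝ}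
    (h : ∃ C, ∀ s ∈ Ioc (0 : ℝ) 1, |s ^ x * f s| ≤ C) : f =O[𝓝[>] 0] (· ^ (-x)) := by
  obtain ⟨C, hC⟩ := h
  refine .of_bound C ?_
  filter_upwards [Ioc_mem_nhdsGT one_pos] with s hs
  have hpos : 0 < s ^ x := Real.rpow_pos_of_pos hs.1 x
  have hbound := hC s hs
  rw [abs_mul, abs_of_pos hpos] at hbound
  rw [Real.rpow_neg hs.1.le, norm_inv, Real.norm_of_nonneg hpos.le, Real.norm_eq_abs,
    ← div_eq_mul_inv, le_div_iff₀' hpos]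
  exact hbound

theorem isBigO_rpow_of_le_exp_neg {f : ℝ → ℝ} {C δ s₀ : ℝ} (hδ : 0 < δ)
    (h : ∀ s, s₀ ≤ s → |f s| ≤ C * Real.exp (-δ * s)) (x : ℝ) : f =O[atTop] (· ^ x) := by
  have hexp : f =O[atTop] fun s ↦ Real.exp (-δ * s) :=
    .of_bound C <| (eventually_ge_atTop s₀).mono fun s hs ↦ by
      simpa only [Real.norm_eq_abs, Real.abs_exp] using h s hs
  exact hexp.trans (isLittleO_exp_neg_mul_rpow_atTop hδ x).isBigO

theorem integrableOn_rpow_mul_sq_of_isBigO {f : ℝ → ℝ} {b c q : ℝ}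
    (hf : ContinuousOn f (Ioi 0)) (hzero : f =O[𝓝[>] 0] (· ^ (-b))) (hb : 2 * b < q + 1)
    (htop : f =O[atTop] (· ^ (-c))) (hc : q + 1 < 2 * c) :
    IntegrableOn (fun s ↦ s ^ q * f s ^ 2) (Ioi 0) := by
  have hsq_zero : (fun s ↦ f s ^ 2) =O[𝓝[>] 0] (· ^ (-(2 * b))) := by
    simpa only [sq, two_mul, neg_add] using
      isBigO_mul_rpow_add (l := 𝓝[>] 0) eventually_mem_nhdsWithin hzero hzero
  have hsq_top : (fun s ↦ f s ^ 2) =O[atTop] (· ^ (-(2 * c))) := by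
    simpa only [sq, two_mul, neg_add] using
      isBigO_mul_rpow_add (eventually_gt_atTop 0) htop htop
  simpa only [add_sub_cancel_right, Pi.pow_apply] using
    mellin_convergent_of_isBigO_scalar ((hf.pow 2).locallyIntegrableOn measurableSet_Ioi)
      hsq_top hc hsq_zero hb

/-- The primitive `s ^ p φ φ' - (p - a) / 2 s ^ (p - 1) φ²` appearing in the virial identity for
`φ'' + (a / s) φ' = φ` with weight `s ^ p`; the argument `φ'` stands for the derivative of `φ`. -/
noncomputable def virialFlux (a p : ℝ) (φ φ' : ℝ → ℝ) (s : ℝ) : ℝ :=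
  s ^ p * (φ s * φ' s) - (p - a) / 2 * (s ^ (p - 1) * φ s ^ 2)

variable {a p : ℝ} {φ φ' : ℝ → ℝ}

theorem hasDerivAt_virialFlux {s : ℝ} (hs : 0 < s) (hφ : HasDerivAt φ (φ' s) s)
    (hφ' : HasDerivAt φ' (φ s - a / s * φ' s) s) :
    HasDerivAt (virialFlux a p φ φ')
      (s ^ p * (φ s ^ 2 + φ' s ^ 2) - (p - a) * (p - 1) / 2 * (s ^ (p - 2) * φ s ^ 2)) s := by
  have hpow (q : ℝ) : HasDerivAt (fun t : ℝ ↦ t ^ q) (q * s ^ (q - 1)) s :=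
    Real.hasDerivAt_rpow_const (.inl hs.ne')
  have hp : s ^ p = s ^ (p - 2) * s ^ 2 := by
    rw [← Real.rpow_add_natCast hs.ne']; norm_num
  have hp_one : s ^ (p - 1) = s ^ (p - 2) * s := by
    rw [← Real.rpow_add_one hs.ne']; ring_nf
  refine (((hpow p).mul (hφ.mul hφ')).sub
    (((hpow (p - 1)).mul (hφ.pow 2)).const_mul ((p - a) / 2))).congr_deriv ?_
  simp only [Pi.mul_apply, Pi.pow_apply, sub_sub, one_add_one_eq_two, hp, hp_one]
  field_simp
  push_cast
  ring

theorem tendsto_virialFlux_zero {l : Filter ℝ} (hl : ∀ᶠ s in l, 0 < s) {x y : ℝ}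
    (hφ : φ =O[l] (· ^ x)) (hφ' : φ' =O[l] (· ^ y))
    (hxy : Tendsto (fun s : ℝ ↦ s ^ (p + (x + y))) l (𝓝 0))
    (hxx : Tendsto (fun s : ℝ ↦ s ^ (p - 1 + (x + x))) l (𝓝 0)) :
    Tendsto (virialFlux a p φ φ') l (𝓝 0) := by
  have hcross : Tendsto (fun s ↦ s ^ p * (φ s * φ' s)) l (𝓝 0) :=
    (isBigO_mul_rpow_add hl (isBigO_refl _ l) (isBigO_mul_rpow_add hl hφ hφ')).trans_tendsto hxy
  have hsquare : Tendsto (fun s ↦ s ^ (p - 1) * φ s ^ 2) l (𝓝 0) := by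
    simpa only [sq] using
      (isBigO_mul_rpow_add hl (isBigO_refl _ l) (isBigO_mul_rpow_add hl hφ hφ)).trans_tendsto hxx
  simpa only [mul_zero, sub_zero] using! hcross.sub (hsquare.const_mul ((p - a) / 2))

theorem stmt_1_general {b b' c : ℝ} (hφ : DifferentiableOn ℝ φ (Ioi 0))
    (hφ' : DifferentiableOn ℝ (deriv φ) (Ioi 0))
    (hode : ∀ s, 0 < s → deriv (deriv φ) s + a / s * deriv φ s - φ s = 0)
    (hzero : φ =O[𝓝[>] 0] (· ^ (-b))) (hb : 2 * b < p - 1)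
    (hzero' : deriv φ =O[𝓝[>] 0] (· ^ (-b'))) (hb' : 2 * b' < p + 1)
    (htop : φ =O[atTop] (· ^ (-c))) (htop' : deriv φ =O[atTop] (· ^ (-c))) (hc : p + 1 < 2 * c) :
    ∫ s in Ioi (0 : ℝ), s ^ p * (φ s ^ 2 + deriv φ s ^ 2) =
      (p - a) * (p - 1) / 2 * ∫ s in Ioi (0 : ℝ), s ^ (p - 2) * φ s ^ 2 := by
  have hderiv (s : ℝ) (hs : s ∈ Ioi 0) : HasDerivAt φ (deriv φ s) s :=
    (hφ.differentiableAt (Ioi_mem_nhds hs)).hasDerivAt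
  have hderiv' (s : ℝ) (hs : s ∈ Ioi 0) : HasDerivAt (deriv φ) (φ s - a / s * deriv φ s) s :=
    (hφ'.differentiableAt (Ioi_mem_nhds hs)).hasDerivAt.congr_deriv (by linarith [hode s hs])
  have hint : IntegrableOn (fun s ↦ s ^ (p - 2) * φ s ^ 2) (Ioi 0) :=
    integrableOn_rpow_mul_sq_of_isBigO hφ.continuousOn hzero (by linarith) htop (by linarith)
  have hint_energy : IntegrableOn (fun s ↦ s ^ p * (φ s ^ 2 + deriv φ s ^ 2)) (Ioi 0) := by
    simp only [mul_add]
    exact (integrableOn_rpow_mul_sq_of_isBigO hφ.continuousOn hzero (by linarith) htop hc).add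
      (integrableOn_rpow_mul_sq_of_isBigO hφ'.continuousOn hzero' hb' htop' hc)
  have hflux_zero : Tendsto (virialFlux a p φ (deriv φ)) (𝓝[>] 0) (𝓝 0) :=
    tendsto_virialFlux_zero eventually_mem_nhdsWithin hzero hzero'
      (tendsto_rpow_nhdsGT_zero (by linarith)) (tendsto_rpow_nhdsGT_zero (by linarith))
  have hflux_top : Tendsto (virialFlux a p φ (deriv φ)) atTop (𝓝 0) :=
    tendsto_virialFlux_zero (eventually_gt_atTop 0) htop htop'
      (tendsto_rpow_atTop_of_neg (by linarith)) (tendsto_rpow_atTop_of_neg (by linarith))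
  have hftc := integral_Ioi_of_hasDerivAt_of_tendsto_nhdsGT
    (fun s hs ↦ hasDerivAt_virialFlux hs (hderiv s hs) (hderiv' s hs))
    (hint_energy.sub (hint.const_mul _)) hflux_zero hflux_top
  rw [integral_sub hint_energy (hint.const_mul _), integral_const_mul, sub_self] at hftc
  exact sub_eq_zero.mp hftc

end

open MeasureTheory Real in
theorem stmt_1 (γ a : ℝ) (hγ : γ ∈ Set.Ioo (0:ℝ) 1) (ha : a = 1 - 2*γ)
    (φ : ℝ → ℝ) (hφ : ContDiffOn ℝ 2 φ (Set.Ioi 0))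
    (hode : ∀ s : ℝ, 0 < s → deriv (deriv φ) s + (a / s) * deriv φ s - φ s = 0)
    (hbdd : ∃ C : ℝ, ∀ s ∈ Set.Ioc (0:ℝ) 1, |φ s| ≤ C)
    (hbdd' : ∃ C : ℝ, ∀ s ∈ Set.Ioc (0:ℝ) 1, |s ^ a * deriv φ s| ≤ C)
    (hdecay : ∃ C δ : ℝ, 0 < C ∧ 0 < δ ∧
      ∀ s : ℝ, 1 ≤ s → |φ s| + |deriv φ s| ≤ C * Real.exp (-δ * s)) :
    ∫ s in Set.Ioi (0:ℝ), s ^ (a+3) * ((φ s)^2 + (deriv φ s)^2) =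
      (3*(a+2)/2) * ∫ s in Set.Ioi (0:ℝ), s ^ (a+1) * (φ s)^2 := by
  obtain ⟨C, δ, -, hδ, hexp⟩ := hdecay
  have hφ' : ContDiffOn ℝ 1 (deriv φ) (Set.Ioi 0) := hφ.deriv_of_isOpen isOpen_Ioi (by norm_num)
  have hvirial := stmt_1_general (p := a + 3) (b := 0) (c := 3)
    (hφ.differentiableOn two_ne_zero) (hφ'.differentiableOn one_ne_zero) hode
    (isBigO_rpow_neg_of_bounded_rpow_mul (by simpa using hbdd)) (by linarith [hγ.2])
    (isBigO_rpow_neg_of_bounded_rpow_mul hbdd') (by linarith [hγ.1])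
    (isBigO_rpow_of_le_exp_neg hδ
      (fun s hs ↦ (le_add_of_nonneg_right (abs_nonneg _)).trans (hexp s hs)) _)
    (isBigO_rpow_of_le_exp_neg hδ
      (fun s hs ↦ (le_add_of_nonneg_left (abs_nonneg _)).trans (hexp s hs)) _)
    (by linarith [hγ.1])
  convert hvirial using 2
  · ring
  · ring_nf
end

section
/- Under the stated hypotheses on φ, the identity ∫₀^∞ s^{a+2}·φ'(s)² ds = ((3+a)/(3−a))·∫₀^∞ s^{a+2}·φ(s)² ds holds. -/
/-!
Put `F s = s ^ (p + 1) * (φ' s ^ 2 - c * φ s ^ 2)`. By the equation `φ'' + (a / s) φ' = c φ` the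
cross terms `φ φ'` cancel in `F'`, which is therefore a linear combination of `s ^ p * φ' s ^ 2` and
`s ^ p * φ s ^ 2`. If these two functions are integrable on `(0, ∞)`, so are `F'` and `F s / s`, and
this alone gives `∫ F' = 0`: in the variable `t = log s`, an integrable function on `ℝ` with
integrable derivative vanishes at `±∞`. The theorem is the case `p = a + 2`, `c = 1`.
-/

open Asymptotics Filter MeasureTheory Set Topology

section LogarithmicBoundary

variable {E : Type*} [NormedAddCommGroup E] [NormedSpace ℝ E]

lemma integrable_comp_exp {f : ℝ → E} :
    Integrable (fun t ↦ Real.exp t • f (Real.exp t)) ↔ IntegrableOn f (Ioi 0) := by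
  have h := integrableOn_image_iff_integrableOn_abs_deriv_smul MeasurableSet.univ
    (fun t _ ↦ (Real.hasDerivAt_exp t).hasDerivWithinAt) Real.exp_injective.injOn f
  simpa only [image_univ, Real.range_exp, Real.abs_exp, integrableOn_univ] using h.symm

lemma integral_comp_exp (f : ℝ → E) :
    ∫ t, Real.exp t • f (Real.exp t) = ∫ s in Ioi 0, f s := by
  have h := integral_image_eq_integral_abs_deriv_smul MeasurableSet.univ
    (fun t _ ↦ (Real.hasDerivAt_exp t).hasDerivWithinAt) Real.exp_injective.injOn f
  simpa only [image_univ, Real.range_exp, Real.abs_exp, setIntegral_univ] using h.symm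

lemma integral_Ioi_eq_zero_of_hasDerivAt_of_integrableOn_inv_smul {F F' : ℝ → E}
    (hF : ∀ s, 0 < s → HasDerivAt F (F' s) s) (hF' : IntegrableOn F' (Ioi 0))
    (hF_div : IntegrableOn (fun s ↦ s⁻¹ • F s) (Ioi 0)) :
    ∫ s in Ioi 0, F' s = 0 := by
  have hderiv (t : ℝ) : HasDerivAt (fun t ↦ F (Real.exp t)) (Real.exp t • F' (Real.exp t)) t :=
    (hF _ (Real.exp_pos t)).scomp t (Real.hasDerivAt_exp t)
  have hF_exp : Integrable (fun t ↦ F (Real.exp t)) := by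
    simpa only [smul_inv_smul₀ (Real.exp_ne_zero _)] using integrable_comp_exp.mpr hF_div
  rw [← integral_comp_exp]
  exact integral_eq_zero_of_hasDerivAt_of_integrable hderiv
    (integrable_comp_exp.mpr hF') hF_exp

end LogarithmicBoundary

section VirialIdentity

variable {φ φ' : ℝ → ℝ} {a c p : ℝ}

lemma hasDerivAt_rpow_mul_deriv_sq_sub_sq {s : ℝ} (hs : 0 < s) (hφ : HasDerivAt φ (φ' s) s)
    (hφ' : HasDerivAt φ' (c * φ s - a / s * φ' s) s) :
    HasDerivAt (fun s ↦ s ^ (p + 1) * (φ' s ^ 2 - c * φ s ^ 2))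
      ((p + 1 - 2 * a) * (s ^ p * φ' s ^ 2) - c * (p + 1) * (s ^ p * φ s ^ 2)) s := by
  have hpow : HasDerivAt (fun s : ℝ ↦ s ^ (p + 1)) ((p + 1) * s ^ p) s := by
    simpa only [add_sub_cancel_right] using Real.hasDerivAt_rpow_const (p := p + 1) (.inl hs.ne')
  refine (hpow.fun_mul ((hφ'.fun_pow 2).fun_sub ((hφ.fun_pow 2).const_mul c))).congr_deriv ?_
  rw [Real.rpow_add_one hs.ne']
  field_simp
  ring

lemma integral_rpow_mul_deriv_sq_of_ode (hφ : ∀ s, 0 < s → HasDerivAt φ (φ' s) s)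
    (hφ' : ∀ s, 0 < s → HasDerivAt φ' (c * φ s - a / s * φ' s) s)
    (hφ_int : IntegrableOn (fun s ↦ s ^ p * φ s ^ 2) (Ioi 0))
    (hφ'_int : IntegrableOn (fun s ↦ s ^ p * φ' s ^ 2) (Ioi 0)) :
    (p + 1 - 2 * a) * ∫ s in Ioi 0, s ^ p * φ' s ^ 2 =
      c * (p + 1) * ∫ s in Ioi 0, s ^ p * φ s ^ 2 := by
  have hboundary :
      IntegrableOn (fun s ↦ s⁻¹ • (s ^ (p + 1) * (φ' s ^ 2 - c * φ s ^ 2))) (Ioi 0) := by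
    refine (hφ'_int.sub (hφ_int.const_mul c)).congr_fun (fun s hs ↦ ?_) measurableSet_Ioi
    have hs : s ≠ 0 := (mem_Ioi.mp hs).ne'
    simp only [Pi.sub_apply, smul_eq_mul, Real.rpow_add_one hs]
    field_simp
  have hzero := integral_Ioi_eq_zero_of_hasDerivAt_of_integrableOn_inv_smul
    (fun s hs ↦ hasDerivAt_rpow_mul_deriv_sq_sub_sq hs (hφ s hs) (hφ' s hs))
    ((hφ'_int.const_mul _).sub (hφ_int.const_mul _)) hboundary
  rwa [integral_sub (hφ'_int.const_mul _) (hφ_int.const_mul _), integral_const_mul,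
    integral_const_mul, sub_eq_zero] at hzero

end VirialIdentity

section Integrability

variable {f : ℝ → ℝ} {p q r C δ : ℝ}

lemma integrableOn_Ioi_rpow_mul_sq_of_isBigO (hf : ContinuousOn f (Ioi 0))
    (hzero : f =O[𝓝[>] 0] (· ^ (-q))) (hq : 2 * q < p + 1)
    (htop : f =O[atTop] (· ^ (-r))) (hr : p + 1 < 2 * r) :
    IntegrableOn (fun s ↦ s ^ p * f s ^ 2) (Ioi 0) := by
  have hsq (b s : ℝ) (hs : 0 < s) : (s ^ (-b)) ^ 2 = s ^ (-(2 * b)) := by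
    rw [← Real.rpow_mul_natCast hs.le]
    ring_nf
  have hzero_sq : (fun s ↦ f s ^ 2) =O[𝓝[>] 0] (· ^ (-(2 * q))) :=
    (hzero.pow 2).congr' .rfl (eventually_mem_nhdsWithin.mono (hsq q))
  have htop_sq : (fun s ↦ f s ^ 2) =O[atTop] (· ^ (-(2 * r))) :=
    (htop.pow 2).congr' .rfl ((eventually_gt_atTop 0).mono (hsq r))
  simpa only [add_sub_cancel_right, Pi.pow_apply] using mellin_convergent_of_isBigO_scalar
    ((hf.pow 2).locallyIntegrableOn measurableSet_Ioi) htop_sq hr hzero_sq hq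

lemma isBigO_rpow_neg_nhdsGT_zero (h : ∀ s ∈ Ioc 0 1, |s ^ q * f s| ≤ C) :
    f =O[𝓝[>] 0] (· ^ (-q)) := by
  refine .of_bound C ?_
  filter_upwards [Ioc_mem_nhdsGT one_pos] with s hs
  have hpos : 0 < s ^ q := Real.rpow_pos_of_pos hs.1 q
  have hbound := h s hs
  rw [abs_mul, abs_of_pos hpos] at hbound
  rwa [Real.rpow_neg hs.1.le, norm_inv, Real.norm_of_nonneg hpos.le, ← div_eq_mul_inv,
    le_div_iff₀' hpos]

lemma isBigO_rpow_atTop_of_abs_le_exp (hδ : 0 < δ)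
    (h : ∀ s, 1 ≤ s → |f s| ≤ C * Real.exp (-δ * s)) : f =O[atTop] (· ^ r) := by
  have hexp : f =O[atTop] fun s ↦ Real.exp (-δ * s) := by
    refine .of_bound C ?_
    filter_upwards [eventually_ge_atTop 1] with s hs
    simpa only [Real.norm_eq_abs, Real.abs_exp] using h s hs
  exact hexp.trans (isLittleO_exp_neg_mul_rpow_atTop hδ r).isBigO

end Integrability

theorem stmt_2_general {a : ℝ} (ha : a ≠ 3) {φ : ℝ → ℝ} (hφ : DifferentiableOn ℝ φ (Ioi 0))
    (hφ' : DifferentiableOn ℝ (deriv φ) (Ioi 0))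
    (hode : ∀ s, 0 < s → deriv (deriv φ) s + (a / s) * deriv φ s - φ s = 0)
    (hφ_int : IntegrableOn (fun s ↦ s ^ (a + 2) * φ s ^ 2) (Ioi 0))
    (hφ'_int : IntegrableOn (fun s ↦ s ^ (a + 2) * deriv φ s ^ 2) (Ioi 0)) :
    ∫ s in Ioi 0, s ^ (a + 2) * deriv φ s ^ 2 =
      ((3 + a) / (3 - a)) * ∫ s in Ioi 0, s ^ (a + 2) * φ s ^ 2 := by
  have hderiv (s : ℝ) (hs : 0 < s) : HasDerivAt φ (deriv φ s) s :=
    (hφ.differentiableAt (Ioi_mem_nhds hs)).hasDerivAt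
  have hderiv' (s : ℝ) (hs : 0 < s) :
      HasDerivAt (deriv φ) (1 * φ s - a / s * deriv φ s) s :=
    (hφ'.differentiableAt (Ioi_mem_nhds hs)).hasDerivAt.congr_deriv (by linarith [hode s hs])
  have hvirial := integral_rpow_mul_deriv_sq_of_ode hderiv hderiv' hφ_int hφ'_int
  rw [div_mul_eq_mul_div, eq_div_iff (sub_ne_zero.mpr ha.symm)]
  linear_combination hvirial

open MeasureTheory Real in
theorem stmt_2 (γ a : ℝ) (hγ : γ ∈ Set.Ioo (0:ℝ) 1) (ha : a = 1 - 2*γ)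
    (φ : ℝ → ℝ) (hφ : ContDiffOn ℝ 2 φ (Set.Ioi 0))
    (hode : ∀ s : ℝ, 0 < s → deriv (deriv φ) s + (a / s) * deriv φ s - φ s = 0)
    (hbdd : ∃ C : ℝ, ∀ s ∈ Set.Ioc (0:ℝ) 1, |φ s| ≤ C)
    (hbdd' : ∃ C : ℝ, ∀ s ∈ Set.Ioc (0:ℝ) 1, |s ^ a * deriv φ s| ≤ C)
    (hdecay : ∃ C δ : ℝ, 0 < C ∧ 0 < δ ∧
      ∀ s : ℝ, 1 ≤ s → |φ s| + |deriv φ s| ≤ C * Real.exp (-δ * s)) :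
    ∫ s in Set.Ioi (0:ℝ), s ^ (a+2) * (deriv φ s)^2 =
      ((3+a)/(3-a)) * ∫ s in Set.Ioi (0:ℝ), s ^ (a+2) * (φ s)^2 := by
  obtain ⟨C₀, hbdd⟩ := hbdd
  obtain ⟨C₁, hbdd'⟩ := hbdd'
  obtain ⟨C, δ, -, hδ, hdecay⟩ := hdecay
  obtain ⟨hγ₀, hγ₁⟩ := hγ
  have hφ' : ContDiffOn ℝ 1 (deriv φ) (Ioi 0) := hφ.deriv_of_isOpen isOpen_Ioi (by norm_num)
  have hzero : φ =O[𝓝[>] 0] (· ^ (-0 : ℝ)) :=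
    isBigO_rpow_neg_nhdsGT_zero (by simpa only [rpow_zero, one_mul] using hbdd)
  have htop : φ =O[atTop] (· ^ (-(a + 3))) := isBigO_rpow_atTop_of_abs_le_exp hδ
    fun s hs ↦ (le_add_of_nonneg_right (abs_nonneg _)).trans (hdecay s hs)
  have htop' : deriv φ =O[atTop] (· ^ (-(a + 3))) := isBigO_rpow_atTop_of_abs_le_exp hδ
    fun s hs ↦ (le_add_of_nonneg_left (abs_nonneg _)).trans (hdecay s hs)
  exact stmt_2_general (by linarith) (hφ.differentiableOn two_ne_zero)
    (hφ'.differentiableOn one_ne_zero) hode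
    (integrableOn_Ioi_rpow_mul_sq_of_isBigO hφ.continuousOn hzero (by linarith) htop (by linarith))
    (integrableOn_Ioi_rpow_mul_sq_of_isBigO hφ'.continuousOn
      (isBigO_rpow_neg_nhdsGT_zero hbdd') (by linarith) htop' (by linarith))
end

section
/- Under the stated hypotheses on φ, the identity ∫₀^∞ s^{a+4}·φ'(s)² ds = ((a+5)(a+3)/5)·∫₀^∞ s^{a+2}·φ(s)² ds holds. -/
/-!
Write `I n = ∫ sⁿ φ'²`, `J n = ∫ sⁿ φ²` and `M n = ∫ sⁿ φ φ'`. The equation gives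
`(φ'² - φ²)' = -(2a/s) φ'²`, `(φ φ')' = φ'² + φ² - (a/s) φ φ'` and `(φ²)' = 2 φ φ'`. Integrated by
parts against `sⁿ⁺¹`, `sⁿ` and `sⁿ⁻¹`, these become `2a I n = (n+1) (I n - J n)`,
`I n + J n = (a-n) M (n-1)` and `2 M (n-1) = -(n-1) J (n-2)`. Eliminating `J n` and `M (n-1)` leaves
`4 (n+1-a) I n = (n+1)(n-1)(n-a) J (n-2)`, and `n = a + 4` is the case at hand.
-/

open Asymptotics Filter MeasureTheory Set Topology

lemma isBigO_rpow_nhdsGT_zero_of_le {r t : ℝ} (h : t ≤ r) :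
    (fun s : ℝ ↦ s ^ r) =O[𝓝[>] 0] fun s ↦ s ^ t := by
  refine IsBigO.of_bound' ?_
  filter_upwards [Ioc_mem_nhdsGT one_pos] with s hs
  rw [Real.norm_of_nonneg (Real.rpow_nonneg hs.1.le r),
    Real.norm_of_nonneg (Real.rpow_nonneg hs.1.le t)]
  exact Real.rpow_le_rpow_of_exponent_ge hs.1 hs.2 h

lemma isBigO_rpow_nhdsGT_zero_of_abs_rpow_mul_le {f : ℝ → ℝ} {r t C : ℝ}
    (hf : ∀ s ∈ Ioc (0 : ℝ) 1, |s ^ r * f s| ≤ C) (ht : t ≤ -r) :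
    f =O[𝓝[>] 0] fun s ↦ s ^ t := by
  refine IsBigO.trans (IsBigO.of_bound C ?_) (isBigO_rpow_nhdsGT_zero_of_le ht)
  filter_upwards [Ioc_mem_nhdsGT one_pos] with s hs
  have hpos : 0 < s ^ r := Real.rpow_pos_of_pos hs.1 r
  have hle := hf s hs
  rw [abs_mul, abs_of_pos hpos] at hle
  rw [Real.rpow_neg hs.1.le, Real.norm_eq_abs, Real.norm_of_nonneg (inv_nonneg.2 hpos.le),
    ← div_eq_mul_inv, le_div_iff₀' hpos]
  exact hle

lemma isBigO_rpow_atTop_of_abs_le_mul_exp_neg {f : ℝ → ℝ} {C δ : ℝ} (hδ : 0 < δ)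
    (hf : ∀ s : ℝ, 1 ≤ s → |f s| ≤ C * Real.exp (-δ * s)) (t : ℝ) :
    f =O[atTop] fun s ↦ s ^ t := by
  refine IsBigO.trans (IsBigO.of_bound C ?_) (isLittleO_exp_neg_mul_rpow_atTop hδ t).isBigO
  filter_upwards [eventually_ge_atTop 1] with s hs
  simpa only [Real.norm_eq_abs, Real.abs_exp] using hf s hs

/-- Power growth of `f` at both ends of `(0, ∞)`: `f s = O(s ^ α)` as `s → 0⁺` and
`f s = O(s ^ β)` as `s → ∞`. It controls the convergence of the moments `∫ s ^ m * f s` and the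
boundary terms in integrations by parts. -/
structure HasPowerBounds (f : ℝ → ℝ) (α β : ℝ) : Prop where
  isBigO_nhdsGT_zero : f =O[𝓝[>] 0] fun s ↦ s ^ α
  isBigO_atTop : f =O[atTop] fun s ↦ s ^ β

namespace HasPowerBounds

variable {f g f' : ℝ → ℝ} {α α' β β' m : ℝ}

lemma of_abs_rpow_mul_le_of_abs_le_mul_exp_neg {r C₀ C δ : ℝ}
    (h_zero : ∀ s ∈ Ioc (0 : ℝ) 1, |s ^ r * f s| ≤ C₀)
    (hα : α ≤ -r) (hδ : 0 < δ) (h_infty : ∀ s, 1 ≤ s → |f s| ≤ C * Real.exp (-δ * s)) :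
    HasPowerBounds f α β :=
  ⟨isBigO_rpow_nhdsGT_zero_of_abs_rpow_mul_le h_zero hα,
    isBigO_rpow_atTop_of_abs_le_mul_exp_neg hδ h_infty β⟩

lemma mono_left (hf : HasPowerBounds f α β) (h : α' ≤ α) : HasPowerBounds f α' β :=
  ⟨hf.isBigO_nhdsGT_zero.trans (isBigO_rpow_nhdsGT_zero_of_le h), hf.isBigO_atTop⟩

lemma sub (hf : HasPowerBounds f α β) (hg : HasPowerBounds g α β) :
    HasPowerBounds (fun s ↦ f s - g s) α β :=
  ⟨hf.isBigO_nhdsGT_zero.sub hg.isBigO_nhdsGT_zero, hf.isBigO_atTop.sub hg.isBigO_atTop⟩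

lemma mul (hf : HasPowerBounds f α β) (hg : HasPowerBounds g α' β') :
    HasPowerBounds (fun s ↦ f s * g s) (α + α') (β + β') where
  isBigO_nhdsGT_zero := (hf.isBigO_nhdsGT_zero.mul hg.isBigO_nhdsGT_zero).congr' .rfl <| by
    filter_upwards [self_mem_nhdsWithin] with s hs using (Real.rpow_add hs α α').symm
  isBigO_atTop := (hf.isBigO_atTop.mul hg.isBigO_atTop).congr' .rfl <| by
    filter_upwards [eventually_gt_atTop 0] with s hs using (Real.rpow_add hs β β').symm

lemma sq (hf : HasPowerBounds f α β) : HasPowerBounds (fun s ↦ f s ^ 2) (2 * α) (2 * β) := by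
  simpa only [pow_two, two_mul] using hf.mul hf

lemma rpow_mul (hf : HasPowerBounds f α β) (m : ℝ) :
    HasPowerBounds (fun s ↦ s ^ m * f s) (m + α) (m + β) :=
  HasPowerBounds.mul ⟨isBigO_refl _ _, isBigO_refl _ _⟩ hf

lemma tendsto_nhdsGT_zero (hf : HasPowerBounds f α β) (hα : 0 < α) :
    Tendsto f (𝓝[>] 0) (𝓝 0) := by
  have h : Tendsto (fun s : ℝ ↦ s ^ α) (𝓝 0) (𝓝 0) := by
    simpa only [Real.zero_rpow hα.ne'] using
      (Real.continuousAt_rpow_const 0 α (Or.inr hα.le)).tendsto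
  exact hf.isBigO_nhdsGT_zero.trans_tendsto (h.mono_left nhdsWithin_le_nhds)

lemma tendsto_atTop (hf : HasPowerBounds f α β) (hβ : β < 0) : Tendsto f atTop (𝓝 0) :=
  hf.isBigO_atTop.trans_tendsto <| by
    simpa only [neg_neg] using tendsto_rpow_neg_atTop (neg_pos.2 hβ)

lemma integrableOn_rpow_mul (hf : HasPowerBounds f α β) (hc : ContinuousOn f (Ioi 0))
    (hα : 0 < m + 1 + α) (hβ : m + 1 + β < 0) :
    IntegrableOn (fun s ↦ s ^ m * f s) (Ioi 0) := by
  have h := mellin_convergent_of_isBigO_scalar (a := -β) (b := -α) (s := m + 1)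
    (hc.locallyIntegrableOn measurableSet_Ioi) (by simpa only [neg_neg] using hf.isBigO_atTop)
    (by linarith) (by simpa only [neg_neg] using hf.isBigO_nhdsGT_zero) (by linarith)
  simpa only [add_sub_cancel_right] using h

lemma integral_rpow_mul_deriv (hf : HasPowerBounds f α β)
    (hderiv : ∀ s, 0 < s → HasDerivAt f (f' s) s)
    (hint : IntegrableOn (fun s ↦ s ^ m * f' s) (Ioi 0)) (hα : 0 < m + α) (hβ : m + β < 0) :
    ∫ s in Ioi (0 : ℝ), s ^ m * f' s = -(m * ∫ s in Ioi (0 : ℝ), s ^ (m - 1) * f s) := by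
  have hcont : ContinuousOn f (Ioi 0) := fun s hs ↦ (hderiv s hs).continuousAt.continuousWithinAt
  have hint' : IntegrableOn (fun s ↦ m * s ^ (m - 1) * f s) (Ioi 0) := by
    simp only [mul_assoc]
    exact (hf.integrableOn_rpow_mul hcont (by linarith) (by linarith)).const_mul m
  have hparts := integral_Ioi_mul_deriv_eq_deriv_mul
    (fun s hs ↦ Real.hasDerivAt_rpow_const (p := m) (Or.inl (ne_of_gt hs))) hderiv hint hint'
    ((hf.rpow_mul m).tendsto_nhdsGT_zero hα) ((hf.rpow_mul m).tendsto_atTop hβ)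
  simpa only [sub_zero, zero_sub, mul_assoc, integral_const_mul] using hparts

lemma two_mul_integral_rpow_mul_mul_deriv (hf : HasPowerBounds f α β)
    (hderiv : ∀ s, 0 < s → HasDerivAt f (f' s) s)
    (hint : IntegrableOn (fun s ↦ s ^ m * (f s * f' s)) (Ioi 0))
    (hα : 0 < m + 2 * α) (hβ : m + 2 * β < 0) :
    2 * ∫ s in Ioi (0 : ℝ), s ^ m * (f s * f' s) =
      -(m * ∫ s in Ioi (0 : ℝ), s ^ (m - 1) * f s ^ 2) := by
  have hsq : ∀ s, 0 < s → HasDerivAt (fun s ↦ f s ^ 2) (2 * (f s * f' s)) s := fun s hs ↦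
    ((hderiv s hs).fun_pow 2).congr_deriv (by ring)
  have hint' : IntegrableOn (fun s ↦ s ^ m * (2 * (f s * f' s))) (Ioi 0) := by
    simp only [mul_left_comm _ (2 : ℝ)]
    exact hint.const_mul 2
  simpa only [mul_left_comm _ (2 : ℝ), integral_const_mul] using
    hf.sq.integral_rpow_mul_deriv hsq hint' hα hβ

end HasPowerBounds

/-- `φ` solves `φ'' + (a / s) φ' - φ = 0` on `(0, ∞)`, where `φ'` denotes its derivative; for
`a = 1 - 2 γ` the function `s ^ γ * K_γ s` is a solution. The equation is encoded by giving the
derivative of `φ'`. -/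
structure IsWeightedBesselSolution (a : ℝ) (φ φ' : ℝ → ℝ) : Prop where
  hasDerivAt : ∀ s, 0 < s → HasDerivAt φ (φ' s) s
  hasDerivAt_deriv : ∀ s, 0 < s → HasDerivAt φ' (φ s - a / s * φ' s) s

namespace IsWeightedBesselSolution

variable {a n α α' β β' : ℝ} {φ φ' : ℝ → ℝ}

lemma of_contDiffOn (hφ : ContDiffOn ℝ 2 φ (Ioi 0))
    (hode : ∀ s, 0 < s → deriv (deriv φ) s + (a / s) * deriv φ s - φ s = 0) :
    IsWeightedBesselSolution a φ (deriv φ) := by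
  rw [← one_add_one_eq_two, contDiffOn_succ_iff_deriv_of_isOpen isOpen_Ioi] at hφ
  obtain ⟨hdiff, -, hcont⟩ := hφ
  refine ⟨fun s hs ↦ (hdiff.differentiableAt (Ioi_mem_nhds hs)).hasDerivAt, fun s hs ↦ ?_⟩
  have h := ((hcont.differentiableOn one_ne_zero).differentiableAt (Ioi_mem_nhds hs)).hasDerivAt
  exact h.congr_deriv (by linarith [hode s hs])

lemma continuousOn (h : IsWeightedBesselSolution a φ φ') : ContinuousOn φ (Ioi 0) :=
  fun s hs ↦ (h.hasDerivAt s hs).continuousAt.continuousWithinAt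

lemma continuousOn_deriv (h : IsWeightedBesselSolution a φ φ') : ContinuousOn φ' (Ioi 0) :=
  fun s hs ↦ (h.hasDerivAt_deriv s hs).continuousAt.continuousWithinAt

lemma hasDerivAt_mul_deriv (h : IsWeightedBesselSolution a φ φ') {s : ℝ} (hs : 0 < s) :
    HasDerivAt (fun s ↦ φ s * φ' s) (φ' s ^ 2 + φ s ^ 2 - a / s * (φ s * φ' s)) s :=
  ((h.hasDerivAt s hs).fun_mul (h.hasDerivAt_deriv s hs)).congr_deriv (by ring)

lemma hasDerivAt_deriv_sq_sub_sq (h : IsWeightedBesselSolution a φ φ') {s : ℝ} (hs : 0 < s) :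
    HasDerivAt (fun s ↦ φ' s ^ 2 - φ s ^ 2) (-(2 * a) / s * φ' s ^ 2) s :=
  (((h.hasDerivAt_deriv s hs).fun_pow 2).fun_sub ((h.hasDerivAt s hs).fun_pow 2)).congr_deriv
    (by ring)

lemma integrableOn_rpow_mul_sq (h : IsWeightedBesselSolution a φ φ')
    (hφ : HasPowerBounds φ α β) (hα : 0 < n + 1 + 2 * α) (hβ : n + 1 + 2 * β < 0) :
    IntegrableOn (fun s ↦ s ^ n * φ s ^ 2) (Ioi 0) :=
  hφ.sq.integrableOn_rpow_mul (h.continuousOn.pow 2) hα hβ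

lemma integrableOn_rpow_mul_deriv_sq (h : IsWeightedBesselSolution a φ φ')
    (hφ' : HasPowerBounds φ' α β) (hα : 0 < n + 1 + 2 * α) (hβ : n + 1 + 2 * β < 0) :
    IntegrableOn (fun s ↦ s ^ n * φ' s ^ 2) (Ioi 0) :=
  hφ'.sq.integrableOn_rpow_mul (h.continuousOn_deriv.pow 2) hα hβ

lemma integrableOn_rpow_mul_mul_deriv (h : IsWeightedBesselSolution a φ φ')
    (hφ : HasPowerBounds φ α β) (hφ' : HasPowerBounds φ' α' β')
    (hα : 0 < n + 1 + (α + α')) (hβ : n + 1 + (β + β') < 0) :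
    IntegrableOn (fun s ↦ s ^ n * (φ s * φ' s)) (Ioi 0) :=
  (hφ.mul hφ').integrableOn_rpow_mul (h.continuousOn.mul h.continuousOn_deriv) hα hβ

lemma integral_rpow_mul_deriv_sq_add_integral_rpow_mul_sq (h : IsWeightedBesselSolution a φ φ')
    (hφ : HasPowerBounds φ α β) (hφ' : HasPowerBounds φ' (α - 1) β)
    (hα : 0 < n - 1 + 2 * α) (hβ : n + 1 + 2 * β < 0) :
    (∫ s in Ioi (0 : ℝ), s ^ n * φ' s ^ 2) + ∫ s in Ioi (0 : ℝ), s ^ n * φ s ^ 2 =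
      (a - n) * ∫ s in Ioi (0 : ℝ), s ^ (n - 1) * (φ s * φ' s) := by
  have hI : IntegrableOn (fun s ↦ s ^ n * φ' s ^ 2) (Ioi 0) :=
    h.integrableOn_rpow_mul_deriv_sq hφ' (by linarith) hβ
  have hJ : IntegrableOn (fun s ↦ s ^ n * φ s ^ 2) (Ioi 0) :=
    h.integrableOn_rpow_mul_sq hφ (by linarith) hβ
  have hM : IntegrableOn (fun s ↦ s ^ (n - 1) * (φ s * φ' s)) (Ioi 0) :=
    h.integrableOn_rpow_mul_mul_deriv hφ hφ' (by linarith) (by linarith)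
  have hIJ : IntegrableOn (fun s ↦ s ^ n * φ' s ^ 2 + s ^ n * φ s ^ 2) (Ioi 0) := hI.add hJ
  have hsplit : EqOn (fun s ↦ s ^ n * (φ' s ^ 2 + φ s ^ 2 - a / s * (φ s * φ' s)))
      (fun s ↦ s ^ n * φ' s ^ 2 + s ^ n * φ s ^ 2 - a * (s ^ (n - 1) * (φ s * φ' s)))
      (Ioi 0) := fun s hs ↦ by
    simp only [Real.rpow_sub_one (ne_of_gt hs)]
    ring
  have hparts := (hφ.mul hφ').integral_rpow_mul_deriv (fun s ↦ h.hasDerivAt_mul_deriv)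
    (IntegrableOn.congr_fun (hIJ.sub (hM.const_mul a)) hsplit.symm measurableSet_Ioi)
    (by linarith) (by linarith)
  rw [setIntegral_congr_fun measurableSet_Ioi hsplit, integral_sub hIJ (hM.const_mul a),
    integral_add hI hJ, integral_const_mul] at hparts
  linear_combination hparts

lemma two_mul_mul_integral_rpow_mul_deriv_sq (h : IsWeightedBesselSolution a φ φ')
    (hφ : HasPowerBounds φ α β) (hφ' : HasPowerBounds φ' (α - 1) β)
    (hα : 0 < n - 1 + 2 * α) (hβ : n + 1 + 2 * β < 0) :
    2 * a * ∫ s in Ioi (0 : ℝ), s ^ n * φ' s ^ 2 =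
      (n + 1) * ((∫ s in Ioi (0 : ℝ), s ^ n * φ' s ^ 2) -
        ∫ s in Ioi (0 : ℝ), s ^ n * φ s ^ 2) := by
  have hI : IntegrableOn (fun s ↦ s ^ n * φ' s ^ 2) (Ioi 0) :=
    h.integrableOn_rpow_mul_deriv_sq hφ' (by linarith) hβ
  have hJ : IntegrableOn (fun s ↦ s ^ n * φ s ^ 2) (Ioi 0) :=
    h.integrableOn_rpow_mul_sq hφ (by linarith) hβ
  have hsplit : EqOn (fun s ↦ s ^ (n + 1) * (-(2 * a) / s * φ' s ^ 2))
      (fun s ↦ -(2 * a) * (s ^ n * φ' s ^ 2)) (Ioi 0) := fun s hs ↦ by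
    have hs0 : s ≠ 0 := ne_of_gt hs
    simp only [Real.rpow_add_one hs0]
    field_simp
  have hparts := (hφ'.sq.sub (hφ.sq.mono_left (by linarith))).integral_rpow_mul_deriv
    (fun s ↦ h.hasDerivAt_deriv_sq_sub_sq)
    (IntegrableOn.congr_fun (hI.const_mul (-(2 * a))) hsplit.symm measurableSet_Ioi)
    (by linarith) hβ
  simp only [setIntegral_congr_fun measurableSet_Ioi hsplit, add_sub_cancel_right, mul_sub,
    integral_sub hI hJ, integral_const_mul] at hparts
  linear_combination -hparts

end IsWeightedBesselSolution

theorem stmt_3_general {a n α β : ℝ} {φ φ' : ℝ → ℝ} (h : IsWeightedBesselSolution a φ φ')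
    (hφ : HasPowerBounds φ α β) (hφ' : HasPowerBounds φ' (α - 1) β)
    (hα : 0 < n - 1 + 2 * α) (hβ : n + 1 + 2 * β < 0) :
    4 * (n + 1 - a) * ∫ s in Ioi (0 : ℝ), s ^ n * φ' s ^ 2 =
      (n + 1) * (n - 1) * (n - a) * ∫ s in Ioi (0 : ℝ), s ^ (n - 2) * φ s ^ 2 := by
  have henergy := h.two_mul_mul_integral_rpow_mul_deriv_sq hφ hφ' hα hβ
  have hvirial := h.integral_rpow_mul_deriv_sq_add_integral_rpow_mul_sq hφ hφ' hα hβ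
  have hcross := hφ.two_mul_integral_rpow_mul_mul_deriv (m := n - 1) h.hasDerivAt
    (h.integrableOn_rpow_mul_mul_deriv hφ hφ' (by linarith) (by linarith)) hα (by linarith)
  rw [show n - 1 - 1 = n - 2 by ring] at hcross
  linear_combination 2 * (n + 1) * hvirial - 2 * henergy + (n + 1) * (a - n) * hcross

open MeasureTheory Real in
theorem stmt_3 (γ a : ℝ) (hγ : γ ∈ Set.Ioo (0:ℝ) 1) (ha : a = 1 - 2*γ)
    (φ : ℝ → ℝ) (hφ : ContDiffOn ℝ 2 φ (Set.Ioi 0))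
    (hode : ∀ s : ℝ, 0 < s → deriv (deriv φ) s + (a / s) * deriv φ s - φ s = 0)
    (hbdd : ∃ C : ℝ, ∀ s ∈ Set.Ioc (0:ℝ) 1, |φ s| ≤ C)
    (hbdd' : ∃ C : ℝ, ∀ s ∈ Set.Ioc (0:ℝ) 1, |s ^ a * deriv φ s| ≤ C)
    (hdecay : ∃ C δ : ℝ, 0 < C ∧ 0 < δ ∧
      ∀ s : ℝ, 1 ≤ s → |φ s| + |deriv φ s| ≤ C * Real.exp (-δ * s)) :
    ∫ s in Set.Ioi (0:ℝ), s ^ (a+4) * (deriv φ s)^2 =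
      ((a+5)*(a+3)/5) * ∫ s in Set.Ioi (0:ℝ), s ^ (a+2) * (φ s)^2 := by
  obtain ⟨hγ0, hγ1⟩ := hγ
  obtain ⟨C₀, hC₀⟩ := hbdd
  obtain ⟨C₁, hC₁⟩ := hbdd'
  obtain ⟨C, δ, -, hδ, hC⟩ := hdecay
  have hbounds : HasPowerBounds φ 0 (-3) :=
    .of_abs_rpow_mul_le_of_abs_le_mul_exp_neg (r := 0)
      (by simpa only [Real.rpow_zero, one_mul] using hC₀) neg_zero.ge hδ
      fun s hs ↦ le_of_add_le_of_nonneg_left (hC s hs) (abs_nonneg _)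
  have hbounds' : HasPowerBounds (deriv φ) (0 - 1) (-3) :=
    .of_abs_rpow_mul_le_of_abs_le_mul_exp_neg hC₁ (by linarith) hδ
      fun s hs ↦ le_of_add_le_of_nonneg_right (hC s hs) (abs_nonneg _)
  have key := stmt_3_general (n := a + 4) (.of_contDiffOn hφ hode) hbounds hbounds'
    (by linarith) (by linarith)
  rw [show a + 4 - 2 = a + 2 by ring] at key
  linear_combination key / 20
end

section
/- With U the Poisson extension of w(x) = (1 + |x|²)^{−(n−2γ)/2} as defined in the context, one has ∫_{ℝ^{n+1}_+} y^{a+2}·x₁·x₂·(∂₁U)·(∂₂U) dx dy = [(5n³ − 10n² − (a² − 2a + 25)n − 2a² + 4a + 30) / (20·n·(n+2)·(n−3))]·∫_{ℝ^{n+1}_+} y^{a+2}·U² dx dy. -/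
/-!
Writing `A ^ (-s)` as an inverse-Gamma superposition of the Gaussians `exp (-A / t)` in both factors
turns the Poisson integral into a mixture of heat kernels: with `D = n / 2`,
`U(x, y) = C * y ^ (2γ) * ∫∫ α ^ (γ - 1) * β ^ (-γ - 1) * (α + β) ^ (-D)
  * exp (-1 / α - y ^ 2 / β - |x| ^ 2 / (α + β)) dα dβ`.
A derivative `∂ᵢ` only inserts a factor `-2 xᵢ / (α + β)`. Squaring and integrating in `(x, y)`
first leaves, for both sides, a four-fold integral of monomials in `α, β, α', β'` and the sums
`β + β'`, `α + α' + β + β'`, with the weight `exp (-1 / α - 1 / α')`. Liouville's formula evaluates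
it through Beta and Gamma functions; the left-hand side differs only by the factor
`(α + β)(α' + β') / (α + α' + β + β') ^ 2`, so the recurrences of the Beta function make the
quotient of the two sides a rational function.
-/

namespace PoissonBubble

open MeasureTheory Real Set
open ProbabilityTheory (beta beta_pos)
open scoped ENNReal

/-! ### Integrals over the half-line -/

section HalfLine

lemma lintegral_Ioi_congr {f g : ℝ → ℝ≥0∞} (h : ∀ t, 0 < t → f t = g t) :
    ∫⁻ t in Ioi 0, f t = ∫⁻ t in Ioi 0, g t :=
  setLIntegral_congr_fun measurableSet_Ioi h

lemma lintegral_Ioi_eq_mul_lintegral_comp_mul_left {c : ℝ} (hc : 0 < c) (f : ℝ → ℝ≥0∞) :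
    ∫⁻ t in Ioi 0, f t = ENNReal.ofReal c * ∫⁻ t in Ioi 0, f (c * t) := by
  have h := lintegral_image_eq_lintegral_abs_deriv_mul (s := Ioi 0) measurableSet_Ioi
    (fun t _ => (hasDerivAt_const_mul c).hasDerivWithinAt) (mul_right_injective₀ hc.ne').injOn f
  rwa [image_mul_left_Ioi hc, mul_zero, abs_of_pos hc,
    lintegral_const_mul' _ _ ENNReal.ofReal_ne_top] at h

lemma lintegral_Ioi_eq_lintegral_comp_inv (f : ℝ → ℝ≥0∞) :
    ∫⁻ t in Ioi 0, f t = ∫⁻ t in Ioi 0, ENNReal.ofReal (t ^ (-2 : ℝ)) * f t⁻¹ := by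
  have himage : (fun t : ℝ => t⁻¹) '' Ioi 0 = Ioi 0 := by
    ext t
    simp only [image_inv_eq_inv, mem_inv, mem_Ioi, inv_pos]
  have h := lintegral_image_eq_lintegral_abs_deriv_mul measurableSet_Ioi
    (fun t ht => (hasDerivAt_inv (ne_of_gt ht)).hasDerivWithinAt) inv_injective.injOn f
  rw [himage] at h
  refine h.trans (lintegral_Ioi_congr fun t ht => ?_)
  rw [abs_neg, abs_of_pos (by positivity), rpow_neg ht.le, rpow_two]

lemma lintegral_rpow_mul_exp_neg_mul_rpow {p q b : ℝ} (hp : 0 < p) (hq : -1 < q) (hb : 0 < b) :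
    ∫⁻ t in Ioi 0, ENNReal.ofReal (t ^ q * exp (-b * t ^ p)) =
      ENNReal.ofReal (b ^ (-(q + 1) / p) * (1 / p) * Gamma ((q + 1) / p)) := by
  rw [← integral_rpow_mul_exp_neg_mul_rpow hp hq hb, ofReal_integral_eq_lintegral_ofReal
    (integrableOn_rpow_mul_exp_neg_mul_rpow hq hp hb)]
  filter_upwards [ae_restrict_mem measurableSet_Ioi] with t ht
  have : 0 < t := ht
  positivity

lemma lintegral_rpow_mul_exp_neg_mul {s r : ℝ} (hs : 0 < s) (hr : 0 < r) :
    ∫⁻ t in Ioi 0, ENNReal.ofReal (t ^ (s - 1) * exp (-(r * t))) =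
      ENNReal.ofReal (Gamma s * r ^ (-s)) := by
  have h := lintegral_rpow_mul_exp_neg_mul_rpow one_pos (by linarith : -1 < s - 1) hr
  simpa only [rpow_one, neg_mul, sub_add_cancel, div_one, mul_one, mul_comm (Gamma s)] using h

lemma lintegral_rpow_mul_exp_neg_div {s r : ℝ} (hs : 0 < s) (hr : 0 < r) :
    ∫⁻ t in Ioi 0, ENNReal.ofReal (t ^ (-s - 1) * exp (-(r / t))) =
      ENNReal.ofReal (Gamma s * r ^ (-s)) := by
  rw [lintegral_Ioi_eq_lintegral_comp_inv, ← lintegral_rpow_mul_exp_neg_mul hs hr]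
  refine lintegral_Ioi_congr fun t ht => ?_
  rw [← ENNReal.ofReal_mul (by positivity), inv_rpow ht.le, ← rpow_neg ht.le, ← mul_assoc,
    ← rpow_add ht, div_inv_eq_mul]
  ring_nf

end HalfLine

/-! ### Dirichlet integrals -/

section Dirichlet

lemma beta_comm (p q : ℝ) : beta p q = beta q p := by
  rw [beta, beta, add_comm, mul_comm]

lemma beta_add_one_left {p q : ℝ} (hp : p ≠ 0) (hpq : p + q ≠ 0) :
    beta (p + 1) q = p / (p + q) * beta p q := by
  rw [beta, beta, add_right_comm, Gamma_add_one hp, Gamma_add_one hpq, mul_assoc,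
    mul_div_mul_comm]

lemma beta_add_one_right {p q : ℝ} (hq : q ≠ 0) (hpq : p + q ≠ 0) :
    beta p (q + 1) = q / (p + q) * beta p q := by
  rw [beta_comm, beta_add_one_left hq (by rwa [add_comm]), beta_comm p, add_comm q]

lemma lintegral_lintegral_comp_add_eq_lintegral_mul_lintegral (p q : ℝ) {g : ℝ → ℝ≥0∞}
    (hg : Measurable g) :
    ∫⁻ s in Ioi 0, ∫⁻ t in Ioi 0, ENNReal.ofReal (s ^ (p - 1) * t ^ (q - 1)) * g (s + t) =
      (∫⁻ u in Ioi 0, ENNReal.ofReal (u ^ (q - 1) * (1 + u) ^ (-(p + q)))) *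
        ∫⁻ r in Ioi 0, ENNReal.ofReal (r ^ (p + q - 1)) * g r := by
  have hscale_inner : ∀ s : ℝ, 0 < s →
      ∫⁻ t in Ioi 0, ENNReal.ofReal (s ^ (p - 1) * t ^ (q - 1)) * g (s + t) =
        ∫⁻ u in Ioi 0, ENNReal.ofReal (s ^ (p + q - 1) * u ^ (q - 1)) * g ((1 + u) * s) := by
    intro s hs
    rw [lintegral_Ioi_eq_mul_lintegral_comp_mul_left hs,
      ← lintegral_const_mul' _ _ ENNReal.ofReal_ne_top]
    refine lintegral_Ioi_congr fun u hu => ?_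
    rw [← mul_assoc, ← ENNReal.ofReal_mul hs.le, mul_rpow hs.le hu.le, add_mul, one_mul,
      mul_comm u, show p + q - 1 = 1 + (p - 1) + (q - 1) by ring, rpow_add hs, rpow_add hs,
      rpow_one, mul_assoc s, mul_assoc s, mul_assoc (s ^ (p - 1))]
  have hscale_outer : ∀ u : ℝ, 0 < u →
      ∫⁻ s in Ioi 0, ENNReal.ofReal (s ^ (p + q - 1) * u ^ (q - 1)) * g ((1 + u) * s) =
        ENNReal.ofReal (u ^ (q - 1) * (1 + u) ^ (-(p + q))) *
          ∫⁻ r in Ioi 0, ENNReal.ofReal (r ^ (p + q - 1)) * g r := by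
    intro u hu
    have hu1 : 0 < 1 + u := by positivity
    rw [lintegral_Ioi_eq_mul_lintegral_comp_mul_left hu1
        (fun r => ENNReal.ofReal (r ^ (p + q - 1)) * g r), ← mul_assoc,
      ← ENNReal.ofReal_mul (by positivity), ← lintegral_const_mul' _ _ ENNReal.ofReal_ne_top]
    refine lintegral_Ioi_congr fun s hs => ?_
    have hpow : (1 + u) ^ (-(p + q)) * (1 + u) * (1 + u) ^ (p + q - 1) = 1 := by
      rw [← rpow_add_one hu1.ne', ← rpow_add hu1]
      simp
    rw [← mul_assoc, ← ENNReal.ofReal_mul (by positivity), mul_rpow hu1.le hs.le]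
    congr 2
    linear_combination (-(s ^ (p + q - 1) * u ^ (q - 1))) * hpow
  rw [lintegral_Ioi_congr hscale_inner, lintegral_lintegral_swap (by fun_prop),
    lintegral_Ioi_congr hscale_outer, lintegral_mul_const _ (by fun_prop)]

lemma lintegral_rpow_mul_one_add_rpow {p q : ℝ} (hp : 0 < p) (hq : 0 < q) :
    ∫⁻ u in Ioi 0, ENNReal.ofReal (u ^ (q - 1) * (1 + u) ^ (-(p + q))) =
      ENNReal.ofReal (beta p q) := by
  have hGamma {s : ℝ} (hs : 0 < s) :
      ∫⁻ t in Ioi 0, ENNReal.ofReal (t ^ (s - 1)) * ENNReal.ofReal (exp (-t)) =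
        ENNReal.ofReal (Gamma s) := by
    have h := lintegral_rpow_mul_exp_neg_mul hs one_pos
    rw [one_rpow, mul_one] at h
    rw [← h]
    refine lintegral_Ioi_congr fun t ht => ?_
    rw [← ENNReal.ofReal_mul (by positivity), one_mul]
  have hprod : ∫⁻ s in Ioi 0, ∫⁻ t in Ioi 0,
      ENNReal.ofReal (s ^ (p - 1) * t ^ (q - 1)) * ENNReal.ofReal (exp (-(s + t))) =
        ENNReal.ofReal (Gamma p * Gamma q) := by
    rw [ENNReal.ofReal_mul (Gamma_pos_of_pos hp).le, ← hGamma hp,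
      ← lintegral_mul_const _ (by fun_prop)]
    refine lintegral_Ioi_congr fun s hs => ?_
    rw [← hGamma hq, ← lintegral_const_mul _ (by fun_prop)]
    refine lintegral_Ioi_congr fun t _ => ?_
    rw [neg_add, exp_add, ENNReal.ofReal_mul (by positivity), ENNReal.ofReal_mul (by positivity),
      mul_mul_mul_comm]
  have hpq := Gamma_pos_of_pos (add_pos hp hq)
  rw [beta, ENNReal.ofReal_div_of_pos hpq, ENNReal.eq_div_iff (by simpa) ENNReal.ofReal_ne_top,
    mul_comm, ← hprod, ← hGamma (add_pos hp hq),
    lintegral_lintegral_comp_add_eq_lintegral_mul_lintegral p q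
      (g := fun r => ENNReal.ofReal (exp (-r))) (by fun_prop)]

lemma lintegral_lintegral_rpow_mul_comp_add {p q : ℝ} (hp : 0 < p) (hq : 0 < q)
    {g : ℝ → ℝ≥0∞} (hg : Measurable g) :
    ∫⁻ s in Ioi 0, ∫⁻ t in Ioi 0, ENNReal.ofReal (s ^ (p - 1) * t ^ (q - 1)) * g (s + t) =
      ENNReal.ofReal (beta p q) * ∫⁻ r in Ioi 0, ENNReal.ofReal (r ^ (p + q - 1)) * g r := by
  rw [lintegral_lintegral_comp_add_eq_lintegral_mul_lintegral p q hg,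
    lintegral_rpow_mul_one_add_rpow hp hq]

lemma lintegral_rpow_mul_const_add_rpow {p q A : ℝ} (hp : 0 < p) (hq : 0 < q) (hA : 0 < A) :
    ∫⁻ r in Ioi 0, ENNReal.ofReal (r ^ (p - 1) * (A + r) ^ (-(p + q))) =
      ENNReal.ofReal (beta p q * A ^ (-q)) := by
  rw [lintegral_Ioi_eq_mul_lintegral_comp_mul_left hA, mul_comm (beta p q),
    ENNReal.ofReal_mul (by positivity), beta_comm, ← lintegral_rpow_mul_one_add_rpow hq hp,
    ← lintegral_const_mul' _ _ ENNReal.ofReal_ne_top,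
    ← lintegral_const_mul' _ _ ENNReal.ofReal_ne_top]
  refine lintegral_Ioi_congr fun u hu => ?_
  rw [← ENNReal.ofReal_mul (by positivity), ← ENNReal.ofReal_mul (by positivity),
    mul_rpow hA.le hu.le, show A + A * u = A * (1 + u) by ring, mul_rpow hA.le (by positivity),
    add_comm q p, show -q = 1 + (p - 1) + -(p + q) by ring, rpow_add hA, rpow_add hA, rpow_one]
  ring_nf

lemma lintegral_rpow_mul_rpow_mul_add_rpow {q q' k e A : ℝ} (hq : 0 < q) (hq' : 0 < q')
    (hk : 0 < k) (he : 0 < e) (hA : 0 < A) :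
    ∫⁻ s in Ioi 0, ∫⁻ t in Ioi 0, ENNReal.ofReal (s ^ (q - 1) * t ^ (q' - 1) *
        (s + t) ^ (k - q - q') * (A + (s + t)) ^ (-(k + e))) =
      ENNReal.ofReal (beta q q' * beta k e * A ^ (-e)) := by
  rw [mul_assoc, ENNReal.ofReal_mul (beta_pos hq hq').le,
    ← lintegral_rpow_mul_const_add_rpow hk he hA]
  convert! lintegral_lintegral_rpow_mul_comp_add hq hq'
    (g := fun r => ENNReal.ofReal (r ^ (k - q - q') * (A + r) ^ (-(k + e)))) (by fun_prop) using 1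
  · refine lintegral_Ioi_congr fun s hs => lintegral_Ioi_congr fun t ht => ?_
    rw [← ENNReal.ofReal_mul (by positivity), mul_assoc (_ * _)]
  · congr 1
    refine lintegral_Ioi_congr fun r hr => ?_
    rw [← ENNReal.ofReal_mul (by positivity), ← mul_assoc, ← rpow_add hr]
    ring_nf

lemma lintegral_rpow_mul_exp_neg_div_mul_add_rpow {p p' e : ℝ} (hp : 0 < e - p) (hp' : 0 < e - p')
    (he : 0 < e - p - p') :
    ∫⁻ s in Ioi 0, ∫⁻ t in Ioi 0,
        ENNReal.ofReal (s ^ (p - 1) * t ^ (p' - 1) * exp (-(1 / s)) * exp (-(1 / t)) *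
          (s + t) ^ (-e)) =
      ENNReal.ofReal (beta (e - p) (e - p') * Gamma (e - p - p')) := by
  have hGamma := lintegral_rpow_mul_exp_neg_mul he one_pos
  rw [one_rpow, mul_one] at hGamma
  rw [ENNReal.ofReal_mul (beta_pos hp hp').le, ← hGamma]
  convert! lintegral_lintegral_rpow_mul_comp_add hp hp'
    (g := fun r => ENNReal.ofReal (r ^ (-e) * exp (-(1 * r)))) (by fun_prop) using 1
  · rw [lintegral_Ioi_eq_lintegral_comp_inv]
    refine lintegral_Ioi_congr fun s hs => ?_
    rw [lintegral_Ioi_eq_lintegral_comp_inv, ← lintegral_const_mul' _ _ ENNReal.ofReal_ne_top]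
    refine lintegral_Ioi_congr fun t ht => ?_
    rw [← ENNReal.ofReal_mul (by positivity), ← ENNReal.ofReal_mul (by positivity),
      ← ENNReal.ofReal_mul (by positivity),
      show s⁻¹ + t⁻¹ = s⁻¹ * t⁻¹ * (s + t) by field_simp; ring,
      mul_rpow (by positivity) (by positivity), mul_rpow (by positivity) (by positivity)]
    simp only [inv_rpow hs.le, inv_rpow ht.le, ← rpow_neg hs.le, ← rpow_neg ht.le, one_div,
      inv_inv, neg_neg, one_mul]
    rw [show e - p - 1 = -2 + -(p - 1) + e by ring, show e - p' - 1 = -2 + -(p' - 1) + e by ring,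
      rpow_add hs, rpow_add hs, rpow_add ht, rpow_add ht, neg_add, exp_add]
    ring_nf
  · congr 1
    refine lintegral_Ioi_congr fun r hr => ?_
    rw [← ENNReal.ofReal_mul (by positivity), ← mul_assoc, ← rpow_add hr]
    ring_nf

end Dirichlet

/-! ### The overlap integrals -/

section Overlap

/-- Lebesgue measure on the open quadrant `(0, ∞)²`. It is the parameter space of pairs of Gaussian
variances, one for the function being extended and one for the kernel extending it. -/
noncomputable abbrev quadrant : Measure (ℝ × ℝ) :=
  (volume.restrict (Ioi 0)).prod (volume.restrict (Ioi 0))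

lemma ae_quadrant_pos : ∀ᵐ z ∂quadrant, 0 < z.1 ∧ 0 < z.2 :=
  (Measure.quasiMeasurePreserving_fst.ae (ae_restrict_mem measurableSet_Ioi)).and
    (Measure.quasiMeasurePreserving_snd.ae (ae_restrict_mem measurableSet_Ioi))

lemma ae_quadrant_prod_pos :
    ∀ᵐ z ∂quadrant.prod quadrant, (0 < z.1.1 ∧ 0 < z.1.2) ∧ 0 < z.2.1 ∧ 0 < z.2.2 :=
  (Measure.quasiMeasurePreserving_fst.ae ae_quadrant_pos).and
    (Measure.quasiMeasurePreserving_snd.ae ae_quadrant_pos)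

lemma lintegral_prod_prod_prod_comm {X Y : Type*} [MeasurableSpace X] [MeasurableSpace Y]
    (μ : Measure X) (ν : Measure Y) [SFinite μ] [SFinite ν] {f : (X × Y) × X × Y → ℝ≥0∞}
    (hf : Measurable f) :
    ∫⁻ z, f z ∂(μ.prod ν).prod (μ.prod ν) =
      ∫⁻ x, ∫⁻ x', ∫⁻ y, ∫⁻ y', f ((x, y), x', y') ∂ν ∂ν ∂μ ∂μ := by
  rw [lintegral_prod _ hf.aemeasurable, lintegral_prod _ hf.lintegral_prod_right'.aemeasurable]
  refine lintegral_congr fun x => ?_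
  have hsplit (y : Y) : ∫⁻ w, f ((x, y), w) ∂μ.prod ν = ∫⁻ x', ∫⁻ y', f ((x, y), x', y') ∂ν ∂μ :=
    lintegral_prod _ (by fun_prop)
  have hmeas : Measurable fun p : (Y × X) × Y => f ((x, p.1.1), p.1.2, p.2) := by fun_prop
  simp only [hsplit]
  exact lintegral_lintegral_swap hmeas.lintegral_prod_right'.aemeasurable

/-- A monomial in the variances `z = ((α, β), (α', β'))`, weighted by `e^{-1/α - 1/α'}`: up to this
weight it is `α^(p-1) α'^(p'-1) β^(q-1) β'^(q'-1) (β + β')^(k-q-q') (α + α' + β + β')^(-(k+e))`.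
The exponents are arranged so that its integral is a product of beta and Gamma values. -/
noncomputable def pairMonomial (p p' q q' k e : ℝ) (z : (ℝ × ℝ) × ℝ × ℝ) : ℝ :=
  z.1.1 ^ (p - 1) * z.2.1 ^ (p' - 1) * exp (-(1 / z.1.1)) * exp (-(1 / z.2.1)) *
    (z.1.2 ^ (q - 1) * z.2.2 ^ (q' - 1) * (z.1.2 + z.2.2) ^ (k - q - q') *
      (z.1.1 + z.2.1 + (z.1.2 + z.2.2)) ^ (-(k + e)))

@[fun_prop]
lemma measurable_pairMonomial (p p' q q' k e : ℝ) : Measurable (pairMonomial p p' q q' k e) := by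
  unfold pairMonomial
  fun_prop

lemma pairMonomial_nonneg {p p' q q' k e : ℝ} {z : (ℝ × ℝ) × ℝ × ℝ}
    (hz : (0 < z.1.1 ∧ 0 < z.1.2) ∧ 0 < z.2.1 ∧ 0 < z.2.2) :
    0 ≤ pairMonomial p p' q q' k e z := by
  obtain ⟨⟨hα, hβ⟩, hα', hβ'⟩ := hz
  unfold pairMonomial
  positivity

lemma lintegral_pairMonomial {p p' q q' k e : ℝ} (hq : 0 < q) (hq' : 0 < q') (hk : 0 < k)
    (he : 0 < e) (hp : 0 < e - p) (hp' : 0 < e - p') (hpp' : 0 < e - p - p') :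
    ∫⁻ z, ENNReal.ofReal (pairMonomial p p' q q' k e z) ∂quadrant.prod quadrant =
      ENNReal.ofReal (beta q q' * beta k e * (beta (e - p) (e - p') * Gamma (e - p - p'))) := by
  have hq_pos := beta_pos hq hq'
  have hk_pos := beta_pos hk he
  rw [lintegral_prod_prod_prod_comm _ _ (by fun_prop), ENNReal.ofReal_mul (by positivity),
    ← lintegral_rpow_mul_exp_neg_div_mul_add_rpow hp hp' hpp',
    ← lintegral_const_mul' _ _ ENNReal.ofReal_ne_top]
  refine lintegral_Ioi_congr fun α hα => ?_
  rw [← lintegral_const_mul' _ _ ENNReal.ofReal_ne_top]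
  refine lintegral_Ioi_congr fun α' hα' => ?_
  have hA : 0 < α + α' := by positivity
  have hweight : 0 ≤ α ^ (p - 1) * α' ^ (p' - 1) * exp (-(1 / α)) * exp (-(1 / α')) := by
    positivity
  simp only [pairMonomial]
  simp_rw [ENNReal.ofReal_mul hweight, lintegral_const_mul' _ _ ENNReal.ofReal_ne_top]
  rw [lintegral_rpow_mul_rpow_mul_add_rpow hq hq' hk he hA, ← ENNReal.ofReal_mul hweight,
    ← ENNReal.ofReal_mul hweight, ← ENNReal.ofReal_mul (by positivity)]
  ring_nf

/-- The integral, over two independent pairs `(α, β)`, `(α', β')` of variances, to which both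
weighted `L²` norms reduce: `l = 0` for the extension itself and `l = 1` for the product of two of
its derivatives. The parameter `m` stands for `n / 2 - 2`. -/
noncomputable def overlapIntegral (γ m : ℝ) (l : ℕ) : ℝ≥0∞ :=
  ∫⁻ z, ENNReal.ofReal (((z.1.1 + z.1.2) * (z.2.1 + z.2.2)) ^ l *
    pairMonomial γ γ 2 2 (2 - γ) (m + γ + 2 * l) z) ∂quadrant.prod quadrant

lemma overlapIntegral_zero {γ m : ℝ} (hγ : γ ∈ Ioo 0 2) (hm : γ < m) :
    overlapIntegral γ m 0 =
      ENNReal.ofReal (beta 2 2 * beta (2 - γ) (m + γ) * (beta m m * Gamma (m - γ))) := by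
  obtain ⟨hγ0, hγ2⟩ := hγ
  have h := lintegral_pairMonomial (p := γ) (p' := γ) (q := 2) (q' := 2) (k := 2 - γ) (e := m + γ)
    two_pos two_pos (by linarith) (by linarith) (by linarith) (by linarith) (by linarith)
  simpa only [overlapIntegral, pow_zero, one_mul, Nat.cast_zero, mul_zero, add_zero,
    add_sub_cancel_right] using h

lemma mul_pairMonomial_eq_sum {γ q k e : ℝ} {z : (ℝ × ℝ) × ℝ × ℝ}
    (hz : (0 < z.1.1 ∧ 0 < z.1.2) ∧ 0 < z.2.1 ∧ 0 < z.2.2) :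
    (z.1.1 + z.1.2) * (z.2.1 + z.2.2) * pairMonomial γ γ q q k (e + 2) z =
      pairMonomial (γ + 1) (γ + 1) q q k (e + 2) z +
        pairMonomial (γ + 1) γ q (q + 1) (k + 1) (e + 1) z +
        pairMonomial γ (γ + 1) (q + 1) q (k + 1) (e + 1) z +
        pairMonomial γ γ (q + 1) (q + 1) (k + 2) e z := by
  obtain ⟨⟨hα, hβ⟩, hα', hβ'⟩ := hz
  have hshift {x s : ℝ} (hx : 0 < x) : x ^ (s + 1 - 1) = x ^ (s - 1) * x := by
    rw [add_sub_right_comm, rpow_add_one hx.ne']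
  simp only [pairMonomial, hshift hα, hshift hβ, hshift hα', hshift hβ']
  ring_nf

lemma overlapIntegral_one_eq_add (γ m : ℝ) :
    overlapIntegral γ m 1 =
      ∫⁻ z, ENNReal.ofReal (pairMonomial (γ + 1) (γ + 1) 2 2 (2 - γ) (m + γ + 2) z)
          ∂quadrant.prod quadrant +
        ∫⁻ z, ENNReal.ofReal (pairMonomial (γ + 1) γ 2 (2 + 1) (2 - γ + 1) (m + γ + 1) z)
          ∂quadrant.prod quadrant +
        ∫⁻ z, ENNReal.ofReal (pairMonomial γ (γ + 1) (2 + 1) 2 (2 - γ + 1) (m + γ + 1) z)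
          ∂quadrant.prod quadrant +
        ∫⁻ z, ENNReal.ofReal (pairMonomial γ γ (2 + 1) (2 + 1) (2 - γ + 2) (m + γ) z)
          ∂quadrant.prod quadrant := by
  rw [← lintegral_add_left (by fun_prop), ← lintegral_add_left (by fun_prop),
    ← lintegral_add_left (by fun_prop)]
  refine lintegral_congr_ae ?_
  filter_upwards [ae_quadrant_prod_pos] with z hz
  have hnonneg (p p' q q' k e : ℝ) : 0 ≤ pairMonomial p p' q q' k e z := pairMonomial_nonneg hz
  rw [← ENNReal.ofReal_add (hnonneg ..) (hnonneg ..), ← ENNReal.ofReal_add _ (hnonneg ..),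
    ← ENNReal.ofReal_add _ (hnonneg ..), pow_one, Nat.cast_one, mul_one,
    mul_pairMonomial_eq_sum hz]
  · exact add_nonneg (add_nonneg (hnonneg ..) (hnonneg ..)) (hnonneg ..)
  · exact add_nonneg (hnonneg ..) (hnonneg ..)

/-- The ratio `overlapIntegral γ m 1 / overlapIntegral γ m 0`, in terms of `m = n / 2 - 2`. -/
noncomputable def overlapRatio (γ m : ℝ) : ℝ :=
  ((m + γ) * (m + γ + 1) * m / (2 * (2 * m + 1)) + (2 - γ) * (m + γ) / 2 +
    (2 - γ) * (3 - γ) / 5) / ((m + 2) * (m + 3))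

lemma sum_beta_eq_overlapRatio_mul {γ m : ℝ} (hγ : γ ∈ Ioo 0 2) (hm : γ < m) :
    beta 2 2 * beta (2 - γ) (m + γ + 2) * beta (m + 1) (m + 1) +
        beta 2 (2 + 1) * beta (2 - γ + 1) (m + γ + 1) * beta m (m + 1) +
        beta (2 + 1) 2 * beta (2 - γ + 1) (m + γ + 1) * beta (m + 1) m +
        beta (2 + 1) (2 + 1) * beta (2 - γ + 2) (m + γ) * beta m m =
      overlapRatio γ m * (beta 2 2 * beta (2 - γ) (m + γ) * beta m m) := by
  obtain ⟨hγ0, hγ2⟩ := hγ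
  have hm0 : 0 < m := hγ0.trans hm
  rw [show m + γ + 2 = m + γ + 1 + 1 by ring, show 2 - γ + 2 = 2 - γ + 1 + 1 by ring]
  repeat rw [beta_add_one_left (by linarith) (by linarith)]
  repeat rw [beta_add_one_right (by linarith) (by linarith)]
  unfold overlapRatio
  rw [show 2 - γ + (m + γ + 1) = m + 3 by ring, show 2 - γ + (m + γ) = m + 2 by ring,
    show 2 - γ + 1 + (m + γ) = m + 3 by ring]
  field_simp
  ring

lemma overlapIntegral_one {γ m : ℝ} (hγ : γ ∈ Ioo 0 2) (hm : γ < m) :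
    overlapIntegral γ m 1 = ENNReal.ofReal (overlapRatio γ m) * overlapIntegral γ m 0 := by
  have ⟨hγ0, hγ2⟩ := hγ
  have hm0 : 0 < m := hγ0.trans hm
  rw [overlapIntegral_one_eq_add, overlapIntegral_zero hγ hm]
  repeat rw [lintegral_pairMonomial (by linarith) (by linarith) (by linarith) (by linarith)
    (by linarith) (by linarith) (by linarith)]
  have hbeta {p q k e r s : ℝ} (hp : 0 < p) (hq : 0 < q) (hk : 0 < k) (he : 0 < e) (hr : 0 < r)
      (hs : 0 < s) : 0 ≤ beta p q * beta k e * beta r s :=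
    (mul_pos (mul_pos (beta_pos hp hq) (beta_pos hk he)) (beta_pos hr hs)).le
  have hGamma : 0 ≤ Gamma (m - γ) := (Gamma_pos_of_pos (by linarith)).le
  rw [show m + γ + 2 - (γ + 1) = m + 1 by ring, show m + 1 - (γ + 1) = m - γ by ring,
    show m + γ + 1 - (γ + 1) = m by ring, show m + γ + 1 - γ = m + 1 by ring,
    show m + 1 - (γ + 1) = m - γ by ring, show m + γ - γ = m by ring]
  simp only [← mul_assoc, ENNReal.ofReal_mul' hGamma]
  rw [← add_mul, ← add_mul, ← add_mul, ← ENNReal.ofReal_mul', ← ENNReal.ofReal_add,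
    ← ENNReal.ofReal_add, ← ENNReal.ofReal_add, sum_beta_eq_overlapRatio_mul hγ hm]
  all_goals repeat' apply add_nonneg
  all_goals
    exact hbeta (by linarith) (by linarith) (by linarith) (by linarith) (by linarith) (by linarith)

lemma overlapRatio_nonneg {γ m : ℝ} (hγ : γ ∈ Ioo 0 2) (hm : 0 ≤ m) : 0 ≤ overlapRatio γ m := by
  have ⟨hγ0, hγ2⟩ := hγ
  have hγ2' : 0 ≤ 2 - γ := by linarith
  have hγ3' : 0 ≤ 3 - γ := by linarith
  unfold overlapRatio
  positivity

lemma overlapRatio_half_sub_two {γ n : ℝ} (hn : 3 < n) :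
    overlapRatio γ (n / 2 - 2) =
      (5 * n ^ 3 - 10 * n ^ 2 - ((1 - 2 * γ) ^ 2 - 2 * (1 - 2 * γ) + 25) * n -
        2 * (1 - 2 * γ) ^ 2 + 4 * (1 - 2 * γ) + 30) / (20 * n * (n + 2) * (n - 3)) := by
  have hn3 : n - 3 ≠ 0 := by linarith
  rw [overlapRatio, show 2 * (n / 2 - 2) + 1 = n - 3 by ring,
    show n / 2 - 2 + 2 = n / 2 by ring, show n / 2 - 2 + 3 = (n + 2) / 2 by ring]
  field_simp
  ring

end Overlap

/-! ### Gaussian integrals -/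

section Gaussian

lemma lintegral_ofReal_eq_of_integral_eq {X : Type*} [MeasurableSpace X] {μ : Measure X}
    {f : X → ℝ} {c : ℝ} (hf : ∀ x, 0 ≤ f x) (hc : c ≠ 0) (h : ∫ x, f x ∂μ = c) :
    ∫⁻ x, ENNReal.ofReal (f x) ∂μ = ENNReal.ofReal c := by
  rw [← h, ofReal_integral_eq_lintegral_ofReal (.of_integral_ne_zero (h.trans_ne hc))
    (.of_forall hf)]

lemma integral_sq_mul_exp_neg_mul_sq {p : ℝ} (hp : 0 < p) :
    ∫ t : ℝ, t ^ 2 * exp (-p * t ^ 2) = 1 / (2 * p) * √(π / p) := by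
  have heven := integral_comp_abs (f := fun t : ℝ => t ^ 2 * exp (-p * t ^ 2))
  have hhalf := integral_rpow_mul_exp_neg_mul_rpow (p := 2) (q := 2) two_pos (by norm_num) hp
  have hGamma : Gamma ((2 + 1) / 2) = 1 / 2 * √π := by
    rw [show ((2 + 1) / 2 : ℝ) = 1 / 2 + 1 by norm_num, Gamma_add_one (by norm_num),
      Gamma_one_half_eq]
  have hpow : p ^ (-(2 + 1) / 2 : ℝ) = (p * √p)⁻¹ := by
    rw [show (-(2 + 1) / 2 : ℝ) = -(1 + 1 / 2) by norm_num, rpow_neg hp.le, rpow_add hp, rpow_one,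
      sqrt_eq_rpow]
  simp only [rpow_two, sq_abs] at heven hhalf
  rw [heven, hhalf, hGamma, hpow, sqrt_div pi_pos.le]
  field_simp

lemma integral_prod_sq_mul_exp_neg_mul_sq_norm {ι : Type*} [Fintype ι] (S : Finset ι) {p : ℝ}
    (hp : 0 < p) :
    ∫ x : EuclideanSpace ℝ ι, (∏ k ∈ S, x k ^ 2) * exp (-p * ‖x‖ ^ 2) =
      (1 / (2 * p)) ^ S.card * (π / p) ^ (Fintype.card ι / 2 : ℝ) := by
  classical
  let f (k : ι) (t : ℝ) : ℝ := (if k ∈ S then t ^ 2 else 1) * exp (-p * t ^ 2)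
  have hfactor (x : EuclideanSpace ℝ ι) :
      (∏ k ∈ S, x k ^ 2) * exp (-p * ‖x‖ ^ 2) = ∏ k, f k (x k) := by
    simp only [f]
    rw [Finset.prod_mul_distrib, Finset.prod_ite_mem, Finset.univ_inter, ← exp_sum,
      EuclideanSpace.real_norm_sq_eq, Finset.mul_sum]
  have hf (k : ι) : ∫ t, f k t = (if k ∈ S then 1 / (2 * p) else 1) * √(π / p) := by
    by_cases hk : k ∈ S
    · simp only [f, if_pos hk, integral_sq_mul_exp_neg_mul_sq hp]
    · simp only [f, if_neg hk, one_mul, integral_gaussian]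
  calc ∫ x : EuclideanSpace ℝ ι, (∏ k ∈ S, x k ^ 2) * exp (-p * ‖x‖ ^ 2)
      = ∫ x : ι → ℝ, ∏ k, f k (x k) := by
        simp only [hfactor]
        exact (EuclideanSpace.volume_preserving_symm_measurableEquiv_toLp ι).integral_comp'
          (g := fun x : ι → ℝ => ∏ k, f k (x k))
    _ = (1 / (2 * p)) ^ S.card * √(π / p) ^ Fintype.card ι := by
        rw [integral_fintype_prod_volume_eq_prod]
        simp only [hf]
        rw [Finset.prod_mul_distrib, Finset.prod_ite_mem, Finset.univ_inter, Finset.prod_const,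
          Finset.prod_const, Finset.card_univ]
    _ = _ := by
        rw [sqrt_eq_rpow, ← rpow_natCast (_ ^ _), ← rpow_mul (by positivity), one_div_mul_eq_div]

lemma lintegral_prod_sq_mul_exp_neg_mul_sq_norm {ι : Type*} [Fintype ι] (S : Finset ι) {p : ℝ}
    (hp : 0 < p) :
    ∫⁻ x : EuclideanSpace ℝ ι, ENNReal.ofReal ((∏ k ∈ S, x k ^ 2) * exp (-p * ‖x‖ ^ 2)) =
      ENNReal.ofReal ((1 / (2 * p)) ^ S.card * (π / p) ^ (Fintype.card ι / 2 : ℝ)) :=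
  lintegral_ofReal_eq_of_integral_eq (fun _ => by positivity) (by positivity)
    (integral_prod_sq_mul_exp_neg_mul_sq_norm S hp)

variable {V : Type*} [NormedAddCommGroup V] [InnerProductSpace ℝ V] [FiniteDimensional ℝ V]
  [MeasurableSpace V] [BorelSpace V]

lemma lintegral_exp_neg_sq_norm_sub_div_mul_exp_neg_sq_norm_div (x : V) {α β : ℝ} (hα : 0 < α)
    (hβ : 0 < β) :
    ∫⁻ ξ : V, ENNReal.ofReal (exp (-(‖x - ξ‖ ^ 2 / β)) * exp (-(‖ξ‖ ^ 2 / α))) =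
      ENNReal.ofReal ((π * (α * β / (α + β))) ^ (Module.finrank ℝ V / 2 : ℝ) *
        exp (-(‖x‖ ^ 2 / (α + β)))) := by
  have hp : 0 < 1 / α + 1 / β := by positivity
  have hsquare (ξ : V) : exp (-(‖x - ξ‖ ^ 2 / β)) * exp (-(‖ξ‖ ^ 2 / α)) =
      exp (-(1 / α + 1 / β) * ‖ξ - (α / (α + β)) • x‖ ^ 2) * exp (-(‖x‖ ^ 2 / (α + β))) := by
    rw [← exp_add, ← exp_add, norm_sub_sq_real, norm_sub_sq_real, norm_smul, inner_smul_right,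
      real_inner_comm x ξ, mul_pow, norm_eq_abs, sq_abs]
    congr 1
    field_simp
    ring
  refine lintegral_ofReal_eq_of_integral_eq (fun _ => by positivity) (by positivity) ?_
  simp only [hsquare]
  rw [integral_mul_const,
    integral_sub_right_eq_self (fun ξ : V => exp (-(1 / α + 1 / β) * ‖ξ‖ ^ 2)),
    GaussianFourier.integral_rexp_neg_mul_sq_norm hp]
  congr 2
  field_simp
  ring

end Gaussian

/-! ### Mixtures of Gaussians -/

section Mixture

/-- The density, in the pair `z = (s, t)` of variances, of a mixture of centred Gaussians of
variance `s + t`. With `d = n / 2` it arises from convolving an inverse-Gamma mixture in `s` with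
an inverse-Gamma mixture in `t`; each derivative in space raises `d` by one. -/
noncomputable def heatWeight (p q d a b : ℝ) (z : ℝ × ℝ) : ℝ :=
  z.1 ^ (p - 1) * z.2 ^ (q - 1) * (z.1 + z.2) ^ (-d) * exp (-(a / z.1)) * exp (-(b / z.2))

@[fun_prop]
lemma measurable_heatWeight (p q d a : ℝ) :
    Measurable fun u : ℝ × ℝ × ℝ => heatWeight p q d a u.1 u.2 := by
  unfold heatWeight
  fun_prop

@[fun_prop]
lemma measurable_heatWeight_right (p q d a b : ℝ) : Measurable (heatWeight p q d a b) :=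
  (measurable_heatWeight p q d a).comp measurable_prodMk_left

lemma heatWeight_nonneg {p q d a b : ℝ} {z : ℝ × ℝ} (hz : 0 < z.1 ∧ 0 < z.2) :
    0 ≤ heatWeight p q d a b z := by
  obtain ⟨hs, ht⟩ := hz
  unfold heatWeight
  positivity

lemma heatWeight_add_one {p q d a b : ℝ} {z : ℝ × ℝ} (hz : 0 < z.1 ∧ 0 < z.2) :
    heatWeight p q (d + 1) a b z = heatWeight p q d a b z * (z.1 + z.2)⁻¹ := by
  unfold heatWeight
  rw [neg_add, rpow_add (add_pos hz.1 hz.2), rpow_neg_one]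
  ring

variable {p q d a b : ℝ}

lemma lintegral_quadrant_rpow_mul_exp_neg_div {s₁ s₂ : ℝ} (hs₁ : 0 < s₁) (hs₂ : 0 < s₂)
    (ha : 0 < a) (hb : 0 < b) :
    ∫⁻ z, ENNReal.ofReal (z.1 ^ (-s₁ - 1) * exp (-(a / z.1)) *
        (z.2 ^ (-s₂ - 1) * exp (-(b / z.2)))) ∂quadrant =
      ENNReal.ofReal (Gamma s₁ * a ^ (-s₁) * (Gamma s₂ * b ^ (-s₂))) := by
  have hΓ₁ := Gamma_pos_of_pos hs₁
  rw [ENNReal.ofReal_mul (by positivity), ← lintegral_rpow_mul_exp_neg_div hs₁ ha,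
    ← lintegral_rpow_mul_exp_neg_div hs₂ hb, ← lintegral_prod_mul (by fun_prop) (by fun_prop)]
  refine lintegral_congr_ae ?_
  filter_upwards [ae_quadrant_pos] with z ⟨hs, _⟩
  rw [ENNReal.ofReal_mul (by positivity)]

lemma integrable_heatWeight (hd : 0 ≤ d) (hp : p < d) (hq : q < 0) (ha : 0 < a) (hb : 0 < b) :
    Integrable (heatWeight p q d a b) quadrant := by
  refine ⟨by fun_prop, ?_⟩
  rw [hasFiniteIntegral_iff_ofReal
    (ae_quadrant_pos.mono fun z hz => heatWeight_nonneg hz)]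
  calc ∫⁻ z, ENNReal.ofReal (heatWeight p q d a b z) ∂quadrant
      ≤ ∫⁻ z, ENNReal.ofReal (z.1 ^ (-(d - p) - 1) * exp (-(a / z.1)) *
          (z.2 ^ (-(-q) - 1) * exp (-(b / z.2)))) ∂quadrant := by
        refine lintegral_mono_ae ?_
        filter_upwards [ae_quadrant_pos] with z ⟨hs, ht⟩
        refine ENNReal.ofReal_le_ofReal ?_
        have hsum : (z.1 + z.2) ^ (-d) ≤ z.1 ^ (-d) :=
          rpow_le_rpow_of_nonpos hs (le_add_of_nonneg_right ht.le) (neg_nonpos.mpr hd)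
        calc heatWeight p q d a b z
            ≤ z.1 ^ (p - 1) * z.2 ^ (q - 1) * z.1 ^ (-d) * exp (-(a / z.1)) *
                exp (-(b / z.2)) := by unfold heatWeight; gcongr
          _ = _ := by
            rw [show -(d - p) - 1 = p - 1 + -d by ring, rpow_add hs, neg_neg]
            ring
    _ < ⊤ := by
        rw [lintegral_quadrant_rpow_mul_exp_neg_div (sub_pos.mpr hp) (neg_pos.mpr hq) ha hb]
        exact ENNReal.ofReal_lt_top

variable {V : Type*} [NormedAddCommGroup V]

/-- The superposition, with density `heatWeight p q d a b` in `(s, t)`, of the Gaussians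
`exp (-‖x‖² / (s + t))`. Up to a constant, the Poisson extension of the bubble
`(1 + ‖x‖²) ^ (γ - n / 2)` is `y ^ (2 * γ) * heatMixture γ (-γ) (n / 2) 1 (y ^ 2) x`. -/
noncomputable def heatMixture (p q d a b : ℝ) (x : V) : ℝ :=
  ∫ z, heatWeight p q d a b z * exp (-(‖x‖ ^ 2 / (z.1 + z.2))) ∂quadrant

lemma integrable_heatWeight_mul_exp (hd : 0 ≤ d) (hp : p < d) (hq : q < 0) (ha : 0 < a)
    (hb : 0 < b) (x : V) :
    Integrable (fun z => heatWeight p q d a b z * exp (-(‖x‖ ^ 2 / (z.1 + z.2)))) quadrant := by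
  refine (integrable_heatWeight hd hp hq ha hb).mul_bdd (c := 1)
    (Measurable.aestronglyMeasurable (by fun_prop)) ?_
  filter_upwards [ae_quadrant_pos] with z ⟨hs, ht⟩
  rw [norm_of_nonneg (exp_pos _).le, exp_le_one_iff, neg_nonpos]
  positivity

lemma ofReal_heatMixture (hd : 0 ≤ d) (hp : p < d) (hq : q < 0) (ha : 0 < a) (hb : 0 < b) (x : V) :
    ENNReal.ofReal (heatMixture p q d a b x) =
      ∫⁻ z, ENNReal.ofReal (heatWeight p q d a b z * exp (-(‖x‖ ^ 2 / (z.1 + z.2)))) ∂quadrant :=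
  ofReal_integral_eq_lintegral_ofReal (integrable_heatWeight_mul_exp hd hp hq ha hb x)
    (ae_quadrant_pos.mono fun _ hz => mul_nonneg (heatWeight_nonneg hz) (exp_pos _).le)

lemma heatMixture_nonneg (p q d a b : ℝ) (x : V) : 0 ≤ heatMixture p q d a b x :=
  integral_nonneg_of_ae
    (ae_quadrant_pos.mono fun _ hz => mul_nonneg (heatWeight_nonneg hz) (exp_pos _).le)

variable [InnerProductSpace ℝ V]

lemma hasDerivAt_exp_neg_mul_sq_norm_add_smul (c : ℝ) (x v : V) (t : ℝ) :
    HasDerivAt (fun t : ℝ => exp (-(c * ‖x + t • v‖ ^ 2)))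
      (exp (-(c * ‖x + t • v‖ ^ 2)) * -(c * (2 * inner ℝ (x + t • v) v))) t := by
  have hline : HasDerivAt (fun t : ℝ => x + t • v) v t := by
    simpa only [id, one_smul] using ((hasDerivAt_id t).smul_const v).const_add x
  exact (hline.norm_sq.const_mul c).neg.exp

lemma hasDerivAt_integral_mul_exp_neg_mul_sq_norm {Z : Type*} [MeasurableSpace Z] {μ : Measure Z}
    {R r : Z → ℝ} (hR : Integrable R μ) (hRr : Integrable (fun z => R z * r z) μ)
    (hr_meas : AEStronglyMeasurable r μ) (hr : ∀ᵐ z ∂μ, 0 ≤ r z) (x v : V) :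
    HasDerivAt (fun t : ℝ => ∫ z, R z * exp (-(r z * ‖x + t • v‖ ^ 2)) ∂μ)
      (-(2 * inner ℝ x v) * ∫ z, R z * r z * exp (-(r z * ‖x‖ ^ 2)) ∂μ) 0 := by
  let F' (t : ℝ) (z : Z) : ℝ :=
    R z * (exp (-(r z * ‖x + t • v‖ ^ 2)) * -(r z * (2 * inner ℝ (x + t • v) v)))
  have hexp_meas (t : ℝ) : AEStronglyMeasurable (fun z => exp (-(r z * ‖x + t • v‖ ^ 2))) μ :=
    continuous_exp.comp_aestronglyMeasurable (hr_meas.mul_const _).neg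
  have hexp_le {z : Z} (hz : 0 ≤ r z) (t : ℝ) : ‖exp (-(r z * ‖x + t • v‖ ^ 2))‖ ≤ 1 := by
    rw [norm_of_nonneg (exp_pos _).le, exp_le_one_iff, neg_nonpos]
    positivity
  have hbound : ∀ᵐ z ∂μ, ∀ t ∈ Metric.ball (0 : ℝ) 1,
      ‖F' t z‖ ≤ ‖R z * r z‖ * (2 * ((‖x‖ + ‖v‖) * ‖v‖)) := by
    filter_upwards [hr] with z hz t ht
    have hline : ‖x + t • v‖ ≤ ‖x‖ + ‖v‖ := by
      refine norm_add_le_of_le le_rfl ?_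
      rw [norm_smul]
      exact mul_le_of_le_one_left (norm_nonneg v) (mem_ball_zero_iff.mp ht).le
    calc ‖F' t z‖
        = ‖R z * r z‖ * (‖exp (-(r z * ‖x + t • v‖ ^ 2))‖ * (2 * ‖inner ℝ (x + t • v) v‖)) := by
          simp only [F', norm_mul, norm_neg, norm_ofNat]
          ring
      _ ≤ ‖R z * r z‖ * (1 * (2 * ((‖x‖ + ‖v‖) * ‖v‖))) := by
          gcongr
          · exact hexp_le hz t
          · exact (norm_inner_le_norm _ _).trans (by gcongr)
      _ = _ := by rw [one_mul]
  have hmain := (hasDerivAt_integral_of_dominated_loc_of_deriv_le (F' := F')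
    (Metric.ball_mem_nhds 0 one_pos)
    (.of_forall fun t => hR.aestronglyMeasurable.mul (hexp_meas t))
    (hR.mul_bdd (hexp_meas 0) (hr.mono fun z hz => hexp_le hz 0))
    (hR.aestronglyMeasurable.mul ((hexp_meas 0).mul (hr_meas.mul_const _).neg)) hbound
    (hRr.norm.mul_const _) (.of_forall fun z t _ =>
      (hasDerivAt_exp_neg_mul_sq_norm_add_smul (r z) x v t).const_mul (R z))).2
  refine hmain.congr_deriv ?_
  rw [← integral_const_mul]
  refine integral_congr_ae (.of_forall fun z => ?_)
  simp only [F', zero_smul, add_zero]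
  ring

lemma hasDerivAt_heatMixture (hd : 0 ≤ d) (hp : p < d) (hq : q < 0) (ha : 0 < a) (hb : 0 < b)
    (x v : V) :
    HasDerivAt (fun t : ℝ => heatMixture p q d a b (x + t • v))
      (-(2 * inner ℝ x v) * heatMixture p q (d + 1) a b x) 0 := by
  have hraise : heatWeight p q (d + 1) a b =ᵐ[quadrant]
      fun z => heatWeight p q d a b z * (z.1 + z.2)⁻¹ :=
    ae_quadrant_pos.mono fun z hz => heatWeight_add_one hz
  have hder := hasDerivAt_integral_mul_exp_neg_mul_sq_norm (integrable_heatWeight hd hp hq ha hb)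
    ((integrable_heatWeight (by linarith) (by linarith) hq ha hb).congr hraise)
    (Measurable.aestronglyMeasurable (by fun_prop))
    (ae_quadrant_pos.mono fun z hz => inv_nonneg.mpr (add_pos hz.1 hz.2).le) x v
  simp only [heatMixture, div_eq_inv_mul]
  convert hder using 2
  exact integral_congr_ae (hraise.mono fun z hz => congrArg (· * _) hz)

variable [FiniteDimensional ℝ V] [MeasurableSpace V] [BorelSpace V]

lemma lintegral_rpow_mul_rpow_eq_lintegral_heatWeight {s₁ s₂ : ℝ} (hs₁ : 0 < s₁) (hs₂ : 0 < s₂)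
    (ha : 0 < a) (hb : 0 < b) (x : V) :
    ENNReal.ofReal (Gamma s₁ * Gamma s₂) *
        ∫⁻ ξ, ENNReal.ofReal ((‖x - ξ‖ ^ 2 + b) ^ (-s₂) * (a + ‖ξ‖ ^ 2) ^ (-s₁)) =
      ENNReal.ofReal (π ^ (Module.finrank ℝ V / 2 : ℝ)) *
        ∫⁻ z, ENNReal.ofReal (heatWeight (Module.finrank ℝ V / 2 - s₁)
          (Module.finrank ℝ V / 2 - s₂) (Module.finrank ℝ V / 2) a b z *
            exp (-(‖x‖ ^ 2 / (z.1 + z.2)))) ∂quadrant := by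
  have hΓ₁ := Gamma_pos_of_pos hs₁
  have hΓ₂ := Gamma_pos_of_pos hs₂
  let g (z : ℝ × ℝ) (ξ : V) : ℝ := z.1 ^ (-s₁ - 1) * exp (-((a + ‖ξ‖ ^ 2) / z.1)) *
    (z.2 ^ (-s₂ - 1) * exp (-((‖x - ξ‖ ^ 2 + b) / z.2)))
  have hsubordinate (ξ : V) : ENNReal.ofReal (Gamma s₁ * Gamma s₂) *
      ENNReal.ofReal ((‖x - ξ‖ ^ 2 + b) ^ (-s₂) * (a + ‖ξ‖ ^ 2) ^ (-s₁)) =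
        ∫⁻ z, ENNReal.ofReal (g z ξ) ∂quadrant := by
    rw [lintegral_quadrant_rpow_mul_exp_neg_div hs₁ hs₂ (by positivity) (by positivity),
      ← ENNReal.ofReal_mul (by positivity)]
    ring_nf
  have hg {z : ℝ × ℝ} (hz : 0 < z.1 ∧ 0 < z.2) (ξ : V) :
      ENNReal.ofReal (g z ξ) =
        ENNReal.ofReal (z.1 ^ (-s₁ - 1) * z.2 ^ (-s₂ - 1) * exp (-(a / z.1)) * exp (-(b / z.2))) *
          ENNReal.ofReal (exp (-(‖x - ξ‖ ^ 2 / z.2)) * exp (-(‖ξ‖ ^ 2 / z.1))) := by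
    obtain ⟨hs, ht⟩ := hz
    rw [← ENNReal.ofReal_mul (by positivity)]
    simp only [g, add_div, neg_add, exp_add]
    ring_nf
  rw [← lintegral_const_mul' _ _ ENNReal.ofReal_ne_top, lintegral_congr hsubordinate,
    lintegral_lintegral_swap (by fun_prop), ← lintegral_const_mul' _ _ ENNReal.ofReal_ne_top]
  refine lintegral_congr_ae ?_
  filter_upwards [ae_quadrant_pos] with z hz
  have ⟨hs, ht⟩ := hz
  simp_rw [hg hz]
  rw [lintegral_const_mul' _ _ ENNReal.ofReal_ne_top,
    lintegral_exp_neg_sq_norm_sub_div_mul_exp_neg_sq_norm_div x hs ht,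
    ← ENNReal.ofReal_mul (by positivity), ← ENNReal.ofReal_mul (by positivity)]
  unfold heatWeight
  rw [mul_rpow pi_pos.le (by positivity), div_rpow (by positivity) (by positivity),
    mul_rpow hs.le ht.le, rpow_neg (by positivity), div_eq_mul_inv, sub_sub, sub_sub,
    sub_eq_add_neg _ (s₁ + 1), sub_eq_add_neg _ (s₂ + 1), rpow_add hs, rpow_add ht, neg_add',
    neg_add']
  ring_nf

lemma integral_rpow_mul_rpow_eq_heatMixture {s₁ s₂ : ℝ} (hs₁ : 0 < s₁)
    (hs₂ : Module.finrank ℝ V / 2 < s₂) (ha : 0 < a) (hb : 0 < b) (x : V) :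
    ∫ ξ, (‖x - ξ‖ ^ 2 + b) ^ (-s₂) * (a + ‖ξ‖ ^ 2) ^ (-s₁) =
      π ^ (Module.finrank ℝ V / 2 : ℝ) / (Gamma s₁ * Gamma s₂) *
        heatMixture (Module.finrank ℝ V / 2 - s₁) (Module.finrank ℝ V / 2 - s₂)
          (Module.finrank ℝ V / 2) a b x := by
  have hs₂_pos : 0 < s₂ := lt_of_le_of_lt (by positivity) hs₂
  have hΓ₁ := Gamma_pos_of_pos hs₁
  have hΓ₂ := Gamma_pos_of_pos hs₂_pos
  have h := lintegral_rpow_mul_rpow_eq_lintegral_heatWeight hs₁ hs₂_pos ha hb x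
  rw [← ofReal_heatMixture (by positivity) (sub_lt_self _ hs₁) (sub_neg.mpr hs₂) ha hb] at h
  have hreal := congrArg ENNReal.toReal h
  rw [ENNReal.toReal_mul, ENNReal.toReal_mul, ENNReal.toReal_ofReal (by positivity),
    ENNReal.toReal_ofReal (by positivity), ENNReal.toReal_ofReal (heatMixture_nonneg ..),
    ← integral_eq_lintegral_of_nonneg_ae (.of_forall fun ξ => by positivity)
      (Measurable.aestronglyMeasurable (by fun_prop))] at hreal
  rw [div_mul_eq_mul_div, eq_div_iff (by positivity), mul_comm, hreal]

end Mixture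

/-! ### Weighted `L²` norms of mixtures -/

section WeightedNorm

lemma lintegral_mul_sq_lintegral_eq_lintegral_prod {X Z : Type*} [MeasurableSpace X]
    [MeasurableSpace Z] {μ : Measure X} {ν : Measure Z} [SFinite μ] [SFinite ν] {F : X → ℝ≥0∞}
    {K : X → Z → ℝ≥0∞} (hF : Measurable F) (hK : Measurable (Function.uncurry K)) :
    ∫⁻ x, F x * (∫⁻ z, K x z ∂ν) ^ 2 ∂μ =
      ∫⁻ p, ∫⁻ x, F x * (K x p.1 * K x p.2) ∂μ ∂ν.prod ν := by
  have hsq (x : X) : F x * (∫⁻ z, K x z ∂ν) ^ 2 = ∫⁻ p, F x * (K x p.1 * K x p.2) ∂ν.prod ν := by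
    rw [lintegral_const_mul _ (by fun_prop), lintegral_prod_mul (by fun_prop) (by fun_prop), sq]
  rw [lintegral_congr hsq, lintegral_lintegral_swap (by fun_prop)]

lemma integral_integral_eq_toReal_lintegral {X Y : Type*} [MeasurableSpace X] [MeasurableSpace Y]
    {μ : Measure X} {ν : Measure Y} [SFinite ν] {f : X × Y → ℝ} (hf : Measurable f)
    (hf_nonneg : ∀ᵐ x ∂μ, ∀ y, 0 ≤ f (x, y))
    (hfin : ∫⁻ u, ENNReal.ofReal (f u) ∂μ.prod ν ≠ ⊤) :
    ∫ x, ∫ y, f (x, y) ∂ν ∂μ = (∫⁻ u, ENNReal.ofReal (f u) ∂μ.prod ν).toReal := by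
  have hmeas : Measurable fun x => ∫⁻ y, ENNReal.ofReal (f (x, y)) ∂ν := by fun_prop
  rw [lintegral_prod _ (by fun_prop)] at hfin ⊢
  rw [← integral_toReal hmeas.aemeasurable (ae_lt_top hmeas hfin)]
  refine integral_congr_ae ?_
  filter_upwards [hf_nonneg] with x hx
  exact integral_eq_lintegral_of_nonneg_ae (.of_forall hx)
    (Measurable.aestronglyMeasurable (by fun_prop))

lemma heatWeight_mul_exp_eq (p q d a b : ℝ) (z : ℝ × ℝ) :
    heatWeight p q d a b z = heatWeight p q d a 0 z * exp (-(b / z.2)) := by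
  simp only [heatWeight, zero_div, neg_zero, exp_zero, mul_one]

variable {ι : Type*} [Fintype ι]

lemma lintegral_mul_heatWeight_mul_heatWeight {p q d a e : ℝ} (S : Finset ι) (he : -1 < e)
    {z : (ℝ × ℝ) × ℝ × ℝ} (hz : (0 < z.1.1 ∧ 0 < z.1.2) ∧ 0 < z.2.1 ∧ 0 < z.2.2) :
    ∫⁻ u : ℝ × EuclideanSpace ℝ ι, ENNReal.ofReal (u.1 ^ e * ∏ k ∈ S, u.2 k ^ 2) *
        (ENNReal.ofReal (heatWeight p q d a (u.1 ^ 2) z.1 *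
            exp (-(‖u.2‖ ^ 2 / (z.1.1 + z.1.2)))) *
          ENNReal.ofReal (heatWeight p q d a (u.1 ^ 2) z.2 *
            exp (-(‖u.2‖ ^ 2 / (z.2.1 + z.2.2))))) ∂(volume.restrict (Ioi 0)).prod volume =
      ENNReal.ofReal (heatWeight p q d a 0 z.1 * heatWeight p q d a 0 z.2 *
        ((1 / z.1.2 + 1 / z.2.2) ^ (-(e + 1) / 2) * (1 / 2) * Gamma ((e + 1) / 2) *
          ((1 / (2 * (1 / (z.1.1 + z.1.2) + 1 / (z.2.1 + z.2.2)))) ^ S.card *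
            (π / (1 / (z.1.1 + z.1.2) + 1 / (z.2.1 + z.2.2))) ^ (Fintype.card ι / 2 : ℝ)))) := by
  have hw : 0 ≤ heatWeight p q d a 0 z.1 := heatWeight_nonneg hz.1
  have hw' : 0 ≤ heatWeight p q d a 0 z.2 := heatWeight_nonneg hz.2
  have hW := mul_nonneg hw hw'
  obtain ⟨⟨hα, hβ⟩, hα', hβ'⟩ := hz
  set A := 1 / z.1.2 + 1 / z.2.2
  set B := 1 / (z.1.1 + z.1.2) + 1 / (z.2.1 + z.2.2)
  have hA : 0 < A := by positivity
  have hB : 0 < B := by positivity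
  have hΓ := Gamma_pos_of_pos (show 0 < (e + 1) / 2 by linarith)
  have hA_time : 0 ≤ A ^ (-(e + 1) / 2) * (1 / 2) * Gamma ((e + 1) / 2) := by positivity
  rw [ENNReal.ofReal_mul hW, ENNReal.ofReal_mul hA_time,
    ← lintegral_rpow_mul_exp_neg_mul_rpow two_pos he hA,
    ← lintegral_prod_sq_mul_exp_neg_mul_sq_norm S hB,
    ← lintegral_prod_mul (by fun_prop) (by fun_prop),
    ← lintegral_const_mul' _ _ ENNReal.ofReal_ne_top]
  refine lintegral_congr_ae ?_
  filter_upwards [Measure.quasiMeasurePreserving_fst.ae (ae_restrict_mem measurableSet_Ioi)]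
    with u (hy : 0 < u.1)
  simp only [heatWeight_mul_exp_eq p q d a (u.1 ^ 2)]
  rw [← ENNReal.ofReal_mul (by positivity), ← ENNReal.ofReal_mul (by positivity),
    ← ENNReal.ofReal_mul (by positivity), ← ENNReal.ofReal_mul hW, rpow_two]
  simp only [A, B, neg_mul, add_mul, neg_add, exp_add, one_div_mul_eq_div]
  ring_nf

lemma rpow_mul_rpow_mul_one_div_add_rpow {β β' γ : ℝ} (hβ : 0 < β) (hβ' : 0 < β') :
    β ^ (-γ - 1) * β' ^ (-γ - 1) * (1 / β + 1 / β') ^ (-(2 + γ)) =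
      β ^ (2 - 1 : ℝ) * β' ^ (2 - 1 : ℝ) * (β + β') ^ (2 - γ - 2 - 2) := by
  have hcancel {t : ℝ} (ht : 0 < t) : t ^ (-γ - 1) * t ^ (2 + γ) = t ^ (2 - 1 : ℝ) := by
    rw [← rpow_add ht]
    ring_nf
  rw [show 1 / β + 1 / β' = (β + β') * (β⁻¹ * β'⁻¹) by field_simp; ring, mul_rpow (by positivity)
    (by positivity), mul_rpow (by positivity) (by positivity), inv_rpow hβ.le, inv_rpow hβ'.le,
    ← rpow_neg hβ.le, ← rpow_neg hβ'.le, neg_neg, show 2 - γ - 2 - 2 = -(2 + γ) by ring,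
    ← hcancel hβ, ← hcancel hβ']
  ring

lemma rpow_mul_rpow_mul_one_div_add_pow {s s' D : ℝ} (l : ℕ) (hs : 0 < s) (hs' : 0 < s') :
    s ^ (-(D + l)) * s' ^ (-(D + l)) *
        ((1 / (2 * (1 / s + 1 / s'))) ^ (2 * l) * (π / (1 / s + 1 / s')) ^ D) =
      π ^ D / 4 ^ l * ((s * s') ^ l * (s + s') ^ (-(D + 2 * l))) := by
  have hss' : 0 < s + s' := by positivity
  rw [show 1 / (2 * (1 / s + 1 / s')) = s * s' / (2 * (s + s')) by field_simp; ring,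
    show π / (1 / s + 1 / s') = π * (s * s') / (s + s') by field_simp; ring,
    div_rpow (by positivity) hss'.le, mul_rpow pi_pos.le (by positivity),
    mul_rpow hs.le hs'.le, rpow_neg hs.le, rpow_neg hs'.le, rpow_neg hss'.le,
    show (2 * l : ℝ) = (2 * l : ℕ) by push_cast; rfl, rpow_add_natCast hs.ne',
    rpow_add_natCast hs'.ne', rpow_add_natCast hss'.ne', div_pow, mul_pow, mul_pow, pow_mul,
    pow_mul, show (4 : ℝ) = 2 ^ 2 by norm_num]
  field_simp
  rw [pow_mul, mul_pow]
  ring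

/-- The constant `Γ(2 + γ) π ^ (N / 2) / (2 * 4 ^ l)` by which the weighted `L²` norm of a mixture
on `ℝᴺ` differs from the overlap integral. -/
noncomputable def overlapConst (γ N : ℝ) (l : ℕ) : ℝ :=
  1 / 2 * Gamma (2 + γ) * (π ^ (N / 2) / 4 ^ l)

lemma overlapConst_nonneg {γ N : ℝ} {l : ℕ} (hγ : 0 < γ) : 0 ≤ overlapConst γ N l := by
  have hΓ := Gamma_pos_of_pos (show 0 < 2 + γ by linarith)
  unfold overlapConst
  positivity

lemma heatWeight_mul_heatWeight_mul_eq_pairMonomial {γ D : ℝ} (l : ℕ) {z : (ℝ × ℝ) × ℝ × ℝ}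
    (hz : (0 < z.1.1 ∧ 0 < z.1.2) ∧ 0 < z.2.1 ∧ 0 < z.2.2) :
    heatWeight γ (-γ) (D + l) 1 0 z.1 * heatWeight γ (-γ) (D + l) 1 0 z.2 *
        (1 / z.1.2 + 1 / z.2.2) ^ (-(2 + γ)) *
        ((1 / (2 * (1 / (z.1.1 + z.1.2) + 1 / (z.2.1 + z.2.2)))) ^ (2 * l) *
          (π / (1 / (z.1.1 + z.1.2) + 1 / (z.2.1 + z.2.2))) ^ D) =
      π ^ D / 4 ^ l * (((z.1.1 + z.1.2) * (z.2.1 + z.2.2)) ^ l *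
        pairMonomial γ γ 2 2 (2 - γ) (D - 2 + γ + 2 * l) z) := by
  obtain ⟨⟨hα, hβ⟩, hα', hβ'⟩ := hz
  have htime := rpow_mul_rpow_mul_one_div_add_rpow (γ := γ) hβ hβ'
  have hspace := rpow_mul_rpow_mul_one_div_add_pow (D := D) l (add_pos hα hβ) (add_pos hα' hβ')
  rw [add_add_add_comm] at hspace
  simp only [heatWeight, pairMonomial, zero_div, neg_zero, exp_zero, mul_one]
  rw [show 2 - γ + (D - 2 + γ + 2 * l) = D + 2 * l by ring, ← htime]
  linear_combination (z.1.1 ^ (γ - 1) * z.2.1 ^ (γ - 1) * exp (-(1 / z.1.1)) *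
    exp (-(1 / z.2.1)) * (z.1.2 ^ (-γ - 1) * z.2.2 ^ (-γ - 1) *
      (1 / z.1.2 + 1 / z.2.2) ^ (-(2 + γ)))) * hspace

lemma lintegral_rpow_mul_prod_sq_mul_sq_heatMixture {γ : ℝ} (hγ : 0 < γ) {S : Finset ι} {l : ℕ}
    (hS : S.card = 2 * l) (hcard : 2 * γ < Fintype.card ι) :
    ∫⁻ u : ℝ × EuclideanSpace ℝ ι, ENNReal.ofReal (u.1 ^ (3 + 2 * γ) * (∏ k ∈ S, u.2 k ^ 2) *
        heatMixture γ (-γ) (Fintype.card ι / 2 + l) 1 (u.1 ^ 2) u.2 ^ 2)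
          ∂(volume.restrict (Ioi 0)).prod volume =
      ENNReal.ofReal (overlapConst γ (Fintype.card ι) l) *
        overlapIntegral γ (Fintype.card ι / 2 - 2) l := by
  have hunfold : ∀ᵐ u : ℝ × EuclideanSpace ℝ ι ∂(volume.restrict (Ioi 0)).prod volume,
      ENNReal.ofReal (u.1 ^ (3 + 2 * γ) * (∏ k ∈ S, u.2 k ^ 2) *
        heatMixture γ (-γ) (Fintype.card ι / 2 + l) 1 (u.1 ^ 2) u.2 ^ 2) =
      ENNReal.ofReal (u.1 ^ (3 + 2 * γ) * ∏ k ∈ S, u.2 k ^ 2) *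
        (∫⁻ z, ENNReal.ofReal (heatWeight γ (-γ) (Fintype.card ι / 2 + l) 1 (u.1 ^ 2) z *
          exp (-(‖u.2‖ ^ 2 / (z.1 + z.2)))) ∂quadrant) ^ 2 := by
    filter_upwards [Measure.quasiMeasurePreserving_fst.ae (ae_restrict_mem measurableSet_Ioi)]
      with u (hy : 0 < u.1)
    rw [← ofReal_heatMixture (by positivity) (by linarith [Nat.cast_nonneg (α := ℝ) l])
      (neg_lt_zero.mpr hγ) one_pos (by positivity), ← ENNReal.ofReal_pow (heatMixture_nonneg ..),
      ENNReal.ofReal_mul (by positivity)]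
  rw [lintegral_congr_ae hunfold, lintegral_mul_sq_lintegral_eq_lintegral_prod (by fun_prop)
    (by unfold Function.uncurry; fun_prop), overlapIntegral,
    ← lintegral_const_mul' _ _ ENNReal.ofReal_ne_top]
  refine lintegral_congr_ae ?_
  filter_upwards [ae_quadrant_prod_pos] with z hz
  rw [lintegral_mul_heatWeight_mul_heatWeight S (by linarith) hz,
    ← ENNReal.ofReal_mul (overlapConst_nonneg hγ), hS, overlapConst, mul_assoc (1 / 2 * _),
    ← heatWeight_mul_heatWeight_mul_eq_pairMonomial l hz,
    show (3 + 2 * γ + 1) / 2 = 2 + γ by ring, show -(3 + 2 * γ + 1) / 2 = -(2 + γ) by ring]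
  ring_nf

lemma measurable_heatMixture (p q d a : ℝ) :
    Measurable fun u : ℝ × EuclideanSpace ℝ ι => heatMixture p q d a (u.1 ^ 2) u.2 := by
  have h : Measurable fun v : (ℝ × EuclideanSpace ℝ ι) × ℝ × ℝ =>
      heatWeight p q d a (v.1.1 ^ 2) v.2 * exp (-(‖v.1.2‖ ^ 2 / (v.2.1 + v.2.2))) := by
    fun_prop
  exact h.stronglyMeasurable.integral_prod_right'.measurable

lemma integral_integral_rpow_mul_prod_sq_mul_sq_heatMixture {γ : ℝ} (hγ : 0 < γ) {S : Finset ι}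
    {l : ℕ} (hS : S.card = 2 * l) (hcard : 2 * γ < Fintype.card ι)
    (hfin : overlapIntegral γ (Fintype.card ι / 2 - 2) l ≠ ⊤) :
    ∫ y in Ioi (0 : ℝ), ∫ x : EuclideanSpace ℝ ι, y ^ (3 + 2 * γ) * (∏ k ∈ S, x k ^ 2) *
        heatMixture γ (-γ) (Fintype.card ι / 2 + l) 1 (y ^ 2) x ^ 2 =
      overlapConst γ (Fintype.card ι) l *
        (overlapIntegral γ (Fintype.card ι / 2 - 2) l).toReal := by
  have h := lintegral_rpow_mul_prod_sq_mul_sq_heatMixture hγ hS hcard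
  have hmeas := measurable_heatMixture (ι := ι) γ (-γ) (Fintype.card ι / 2 + l) 1
  rw [← ENNReal.toReal_ofReal (overlapConst_nonneg hγ), ← ENNReal.toReal_mul, ← h]
  refine integral_integral_eq_toReal_lintegral
    (f := fun u : ℝ × EuclideanSpace ℝ ι => u.1 ^ (3 + 2 * γ) * (∏ k ∈ S, u.2 k ^ 2) *
      heatMixture γ (-γ) (Fintype.card ι / 2 + l) 1 (u.1 ^ 2) u.2 ^ 2)
    (Measurable.mul (by fun_prop) (hmeas.pow_const 2)) ?_
    (h ▸ ENNReal.mul_ne_top ENNReal.ofReal_ne_top hfin)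
  filter_upwards [ae_restrict_mem measurableSet_Ioi] with y (hy : 0 < y) x
  positivity

end WeightedNorm

/-! ### The Poisson extension of the bubble -/

section Extension

variable {ι : Type*} [Fintype ι] {γ : ℝ}

/-- The (unnormalised) Poisson extension of the bubble `(1 + ‖ξ‖ ^ 2) ^ (-(N - 2γ) / 2)` on `ℝᴺ`. -/
noncomputable def bubbleExtension (γ : ℝ) (x : EuclideanSpace ℝ ι) (y : ℝ) : ℝ :=
  ∫ ξ : EuclideanSpace ℝ ι, y ^ (2 * γ) *
    (‖x - ξ‖ ^ 2 + y ^ 2) ^ (-((Fintype.card ι + 2 * γ) / 2)) *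
      (1 + ‖ξ‖ ^ 2) ^ (-((Fintype.card ι - 2 * γ) / 2))

/-- The constant relating `bubbleExtension` on `ℝᴺ` to a mixture of Gaussians. -/
noncomputable def bubbleConst (γ N : ℝ) : ℝ :=
  π ^ (N / 2) / (Gamma ((N - 2 * γ) / 2) * Gamma ((N + 2 * γ) / 2))

lemma bubbleExtension_eq_heatMixture (hγ : 0 < γ) (hcard : 2 * γ < Fintype.card ι)
    (x : EuclideanSpace ℝ ι) {y : ℝ} (hy : 0 < y) :
    bubbleExtension γ x y = bubbleConst γ (Fintype.card ι) *
      (y ^ (2 * γ) * heatMixture γ (-γ) (Fintype.card ι / 2) 1 (y ^ 2) x) := by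
  have hfinrank : Module.finrank ℝ (EuclideanSpace ℝ ι) = Fintype.card ι := finrank_euclideanSpace
  have hmix := integral_rpow_mul_rpow_eq_heatMixture (V := EuclideanSpace ℝ ι)
    (s₁ := (Fintype.card ι - 2 * γ) / 2) (s₂ := (Fintype.card ι + 2 * γ) / 2) (by linarith)
    (by rw [hfinrank]; linarith) one_pos (pow_pos hy 2) x
  rw [hfinrank, show (Fintype.card ι / 2 - (Fintype.card ι - 2 * γ) / 2 : ℝ) = γ by ring,
    show (Fintype.card ι / 2 - (Fintype.card ι + 2 * γ) / 2 : ℝ) = -γ by ring] at hmix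
  simp only [bubbleExtension, mul_assoc, integral_const_mul, hmix, bubbleConst]
  ring

lemma deriv_bubbleExtension_add_smul_single [DecidableEq ι] (hγ : 0 < γ)
    (hcard : 2 * γ < Fintype.card ι) (x : EuclideanSpace ℝ ι) (i : ι) {y : ℝ} (hy : 0 < y) :
    deriv (fun t : ℝ => bubbleExtension γ (x + t • EuclideanSpace.single i 1) y) 0 =
      -(2 * x i) * (bubbleConst γ (Fintype.card ι) *
        (y ^ (2 * γ) * heatMixture γ (-γ) (Fintype.card ι / 2 + 1) 1 (y ^ 2) x)) := by
  have hmix := hasDerivAt_heatMixture (p := γ) (q := -γ) (d := Fintype.card ι / 2) (by positivity)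
    (by linarith) (neg_lt_zero.mpr hγ) one_pos (pow_pos hy 2) x (EuclideanSpace.single i 1)
  have hinner : inner ℝ x (EuclideanSpace.single i 1) = x i := by
    simp [EuclideanSpace.inner_single_right]
  rw [hinner] at hmix
  simp only [bubbleExtension_eq_heatMixture hγ hcard _ hy, ← mul_assoc]
  rw [(hmix.const_mul _).deriv]
  ring

lemma rpow_three_sub_mul_sq_rpow {y : ℝ} (hy : 0 < y) :
    y ^ (3 - 2 * γ) * (y ^ (2 * γ)) ^ 2 = y ^ (3 + 2 * γ) := by
  rw [← rpow_mul_natCast hy.le, ← rpow_add hy]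
  push_cast
  ring_nf

lemma integral_integral_rpow_mul_sq_bubbleExtension (hγ : 0 < γ)
    (hcard : 2 * γ < Fintype.card ι)
    (hfin : overlapIntegral γ (Fintype.card ι / 2 - 2) 0 ≠ ⊤) :
    ∫ y in Ioi (0 : ℝ), ∫ x : EuclideanSpace ℝ ι, y ^ (3 - 2 * γ) * bubbleExtension γ x y ^ 2 =
      bubbleConst γ (Fintype.card ι) ^ 2 * (overlapConst γ (Fintype.card ι) 0 *
        (overlapIntegral γ (Fintype.card ι / 2 - 2) 0).toReal) := by
  rw [← integral_integral_rpow_mul_prod_sq_mul_sq_heatMixture (S := ∅) (l := 0) hγ rfl hcard hfin,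
    ← integral_const_mul]
  refine setIntegral_congr_fun measurableSet_Ioi fun y (hy : 0 < y) => ?_
  simp only [← integral_const_mul, bubbleExtension_eq_heatMixture hγ hcard _ hy,
    ← rpow_three_sub_mul_sq_rpow hy, Finset.prod_empty, Nat.cast_zero, add_zero]
  congr with x
  ring

lemma integral_integral_rpow_mul_deriv_mul_deriv_bubbleExtension [DecidableEq ι] (hγ : 0 < γ)
    (hcard : 2 * γ < Fintype.card ι) {i j : ι} (hij : i ≠ j)
    (hfin : overlapIntegral γ (Fintype.card ι / 2 - 2) 1 ≠ ⊤) :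
    ∫ y in Ioi (0 : ℝ), ∫ x : EuclideanSpace ℝ ι, y ^ (3 - 2 * γ) * x i * x j *
        deriv (fun t : ℝ => bubbleExtension γ (x + t • EuclideanSpace.single i 1) y) 0 *
        deriv (fun t : ℝ => bubbleExtension γ (x + t • EuclideanSpace.single j 1) y) 0 =
      4 * bubbleConst γ (Fintype.card ι) ^ 2 * (overlapConst γ (Fintype.card ι) 1 *
        (overlapIntegral γ (Fintype.card ι / 2 - 2) 1).toReal) := by
  rw [← integral_integral_rpow_mul_prod_sq_mul_sq_heatMixture (S := {i, j}) (l := 1) hγ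
    (Finset.card_pair hij) hcard hfin, ← integral_const_mul]
  refine setIntegral_congr_fun measurableSet_Ioi fun y (hy : 0 < y) => ?_
  simp only [← integral_const_mul, deriv_bubbleExtension_add_smul_single hγ hcard _ _ hy,
    ← rpow_three_sub_mul_sq_rpow hy, Finset.prod_pair hij, Nat.cast_one]
  congr with x
  ring

theorem integral_integral_rpow_mul_deriv_mul_deriv_bubbleExtension_eq [DecidableEq ι]
    (hγ : γ ∈ Ioo 0 2) (hcard : 4 + 2 * γ < Fintype.card ι) {i j : ι} (hij : i ≠ j) :
    ∫ y in Ioi (0 : ℝ), ∫ x : EuclideanSpace ℝ ι, y ^ (3 - 2 * γ) * x i * x j *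
        deriv (fun t : ℝ => bubbleExtension γ (x + t • EuclideanSpace.single i 1) y) 0 *
        deriv (fun t : ℝ => bubbleExtension γ (x + t • EuclideanSpace.single j 1) y) 0 =
      overlapRatio γ (Fintype.card ι / 2 - 2) *
        ∫ y in Ioi (0 : ℝ), ∫ x : EuclideanSpace ℝ ι,
          y ^ (3 - 2 * γ) * bubbleExtension γ x y ^ 2 := by
  have ⟨hγ0, _⟩ := hγ
  have hm : γ < (Fintype.card ι / 2 - 2 : ℝ) := by linarith
  have hfin₀ : overlapIntegral γ (Fintype.card ι / 2 - 2) 0 ≠ ⊤ := by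
    rw [overlapIntegral_zero hγ hm]
    exact ENNReal.ofReal_ne_top
  have hratio := overlapIntegral_one hγ hm
  have hfin₁ : overlapIntegral γ (Fintype.card ι / 2 - 2) 1 ≠ ⊤ :=
    hratio ▸ ENNReal.mul_ne_top ENNReal.ofReal_ne_top hfin₀
  have hconst : 4 * overlapConst γ (Fintype.card ι) 1 = overlapConst γ (Fintype.card ι) 0 := by
    unfold overlapConst
    ring
  rw [integral_integral_rpow_mul_deriv_mul_deriv_bubbleExtension hγ0 (by linarith) hij hfin₁,
    integral_integral_rpow_mul_sq_bubbleExtension hγ0 (by linarith) hfin₀, hratio,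
    ENNReal.toReal_mul, ENNReal.toReal_ofReal (overlapRatio_nonneg hγ (hγ0.trans hm).le), ← hconst]
  ring

end Extension

end PoissonBubble

open MeasureTheory Real in
theorem stmt_11_general {ι : Type*} [Fintype ι] [DecidableEq ι] {γ a : ℝ} (hγ : γ ∈ Set.Ioo 0 2)
    (ha : a = 1 - 2 * γ) {n : ℕ} (hcard : Fintype.card ι = n) (hn : 4 + 2 * γ < n) {i j : ι}
    (hij : i ≠ j) {w : EuclideanSpace ℝ ι → ℝ}
    (hw : ∀ x, w x = (1 + ‖x‖ ^ 2) ^ (-((n - 2 * γ) / 2))) {U : EuclideanSpace ℝ ι → ℝ → ℝ}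
    (hU : ∀ x y, U x y = ∫ ξ, y ^ (2 * γ) * (‖x - ξ‖ ^ 2 + y ^ 2) ^ (-((n + 2 * γ) / 2)) * w ξ) :
    ∫ y in Set.Ioi (0 : ℝ), ∫ x, y ^ (a + 2) * x i * x j *
        deriv (fun t : ℝ => U (x + t • EuclideanSpace.single i 1) y) 0 *
        deriv (fun t : ℝ => U (x + t • EuclideanSpace.single j 1) y) 0 =
      (5 * n ^ 3 - 10 * n ^ 2 - (a ^ 2 - 2 * a + 25) * n - 2 * a ^ 2 + 4 * a + 30) /
          (20 * n * (n + 2) * (n - 3)) *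
        ∫ y in Set.Ioi (0 : ℝ), ∫ x, y ^ (a + 2) * U x y ^ 2 := by
  subst ha hcard
  obtain rfl : U = PoissonBubble.bubbleExtension γ := by
    ext x y
    simp only [hU, hw, PoissonBubble.bubbleExtension]
  rw [← PoissonBubble.overlapRatio_half_sub_two (by linarith [hγ.1]),
    show 1 - 2 * γ + 2 = 3 - 2 * γ by ring]
  exact PoissonBubble.integral_integral_rpow_mul_deriv_mul_deriv_bubbleExtension_eq hγ hn hij

open MeasureTheory Real in
theorem stmt_11 (γ : ℝ) (hγ : γ ∈ Set.Ioo (0:ℝ) 1) (a : ℝ) (ha : a = 1 - 2*γ)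
    (n : ℕ) (hn : 4 + 2*γ < (n:ℝ))
    (w : EuclideanSpace ℝ (Fin n) → ℝ)
    (hw : ∀ x : EuclideanSpace ℝ (Fin n), w x = (1 + ‖x‖^2) ^ (-(((n:ℝ) - 2*γ)/2)))
    (U : EuclideanSpace ℝ (Fin n) → ℝ → ℝ)
    (hU : ∀ x : EuclideanSpace ℝ (Fin n), ∀ y : ℝ,
      U x y = ∫ ξ : EuclideanSpace ℝ (Fin n),
        y ^ (2*γ) * (‖x - ξ‖^2 + y^2) ^ (-(((n:ℝ) + 2*γ)/2)) * w ξ) :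
    ∫ y in Set.Ioi (0:ℝ), ∫ x : EuclideanSpace ℝ (Fin n),
      y ^ (a+2) * (x ⟨0, by exact_mod_cast show (0:ℝ) < (n:ℝ) by linarith [hγ.1]⟩) *
        (x ⟨1, by exact_mod_cast show (1:ℝ) < (n:ℝ) by linarith [hγ.1]⟩) *
        (deriv (fun t : ℝ => U (x + t • EuclideanSpace.single
          ⟨0, by exact_mod_cast show (0:ℝ) < (n:ℝ) by linarith [hγ.1]⟩ 1) y) 0) *
        (deriv (fun t : ℝ => U (x + t • EuclideanSpace.single
          ⟨1, by exact_mod_cast show (1:ℝ) < (n:ℝ) by linarith [hγ.1]⟩ 1) y) 0) =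
    ((5*(n:ℝ)^3 - 10*(n:ℝ)^2 - (a^2 - 2*a + 25)*(n:ℝ) - 2*a^2 + 4*a + 30)
        / (20*(n:ℝ)*((n:ℝ)+2)*((n:ℝ)-3))) *
      ∫ y in Set.Ioi (0:ℝ), ∫ x : EuclideanSpace ℝ (Fin n), y ^ (a+2) * (U x y)^2 := by
  exact stmt_11_general ⟨hγ.1, hγ.2.trans one_lt_two⟩ ha (Fintype.card_fin n) hn (by simp) hw hU
end
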